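/- arXiv:1211.3171 — 3 statements merged into one kernel-verified Lean document; each statement's English description precedes it below -/
import Mathlib

section
/- Let (X,d) be a proper metric space and μ a Borel measure on X with 0 < μ(U) < ∞ for every nonempty bounded open set U ⊆ X. Let x₀ ∈ X, C ≥ K_a, C₀ ≥ 1, and assume that the Caffarelli-Kohn-Nirenberg inequality (CKN)_C^{x₀}, the volume condition (VD)^n_{C₀}, and the density condition (AR)^n_{x₀} all hold. Then for every x ∈ X and every ρ > 0 one has μ(B(x,ρ)) ≥ C₀^{-1}·(K_a/C)^{n/(1-a)}·ω_n·ρ^n. -/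
/-!
Write `b = 2 - ap`, `β = (n-2+2a)/(2(1-a))`; then `bβ = n - 2` and `βp = 2β + 2 = n/(1-a)`.
The inequality is tested with the Euclidean extremals (bubbles) `(l + d(x₀,·)^b)^{-β}`, `l > 0`,
which are admissible after truncation (`ckn_radial`, `ckn_bubble`). Everything is then expressed
through the distribution `σ` of `d(x₀,·)` under `μ` and the kernel integrals
`H(l) = ∫ (l + t^b)^{-(2β+1)} t^{-ap} dσ` and `Y(l) = ∫ (l + t^b)^{-(2β+2)} t^{-ap} dσ`.
Since `H' = -(2β+1) Y` (`hasDerivAt_integral_cknKernel`), the tested inequality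
`Y^{2/p} ≤ (C b β)² (H - l Y)` (`integrated_ckn`) is a differential inequality for `H`.

On `ℝ^n` one has `H(l) = h₀ l^{-β}` with an explicit `h₀`
(`lintegral_cknKernel_radialMeasure`). With `s = (K_a/C)^{n/(1-a)} ≤ 1`, the differential inequality
makes `l^β H(l)` strictly increasing wherever it is below `s h₀` (`ode_comparison`, where
`cknConst_threshold` supplies the constant). The density condition makes `l^β H(l)` nearly
`h₀` or larger for suitable arbitrarily small `l` (`lintegral_cknKernel_small`), hence
`l^β H(l) ≥ s h₀` for all `l > 0`.

If a ball `B(x,ρ)` violated the claimed bound, the doubling condition would give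
`μ(B(x₀,R)) ≤ θ ω_n R^n` for all large `R` with some `θ < s`. Letting `l → ∞`
(`lintegral_cknKernel_large`) would then give `s h₀ ≤ θ h₀`, a contradiction.
-/

open MeasureTheory Filter Topology Metric

/-- Volume of the unit ball in `ℝ^n`. -/
noncomputable def omegaBall (n : ℕ) : ℝ :=
  Real.pi ^ ((n : ℝ) / 2) / Real.Gamma ((n : ℝ) / 2 + 1)

/-- The sharp Caffarelli-Kohn-Nirenberg constant `K_a` (for `p = 2n/(n-2+2a)`). -/
noncomputable def CKNconst (n : ℕ) (a p : ℝ) : ℝ :=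
  (1 / (((n : ℝ) - 2) * ((n : ℝ) - a * p))) ^ ((1 : ℝ) / 2) *
    ((2 - a * p) * Real.Gamma ((2 * (n : ℝ) - 2 * a * p) / (2 - a * p)) /
        ((n : ℝ) * omegaBall n * Real.Gamma (((n : ℝ) - a * p) / (2 - a * p)) ^ 2)) ^
      ((2 - a * p) / (2 * (n : ℝ) - 2 * a * p))

/-- The local Lipschitz constant `|Du|(x) = limsup_{y → x} |u(y)-u(x)| / d(x,y)`. -/
noncomputable def locLip {X : Type*} [MetricSpace X] (u : X → ℝ) (x : X) : ℝ :=
  Filter.limsup (fun y => |u y - u x| / dist x y) (𝓝[≠] x)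

/-- The Caffarelli-Kohn-Nirenberg inequality `(CKN)_C^{x₀}` on a metric measure space:
`(∫_X |u|^p / d(x₀,·)^{ap} dμ)^{1/p} ≤ C (∫_X |Du|² dμ)^{1/2}` for all Lipschitz functions
with compact support. -/
def CKNineq {X : Type*} [MetricSpace X] [MeasurableSpace X]
    (μ : Measure X) (x₀ : X) (a p C : ℝ) : Prop :=
  ∀ u : X → ℝ, (∃ K : NNReal, LipschitzWith K u) → HasCompactSupport u →
    (∫⁻ x, ENNReal.ofReal (|u x| ^ p / dist x₀ x ^ (a * p)) ∂μ) ^ ((1 : ℝ) / p) ≤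
      ENNReal.ofReal C * (∫⁻ x, ENNReal.ofReal (locLip u x ^ 2) ∂μ) ^ ((1 : ℝ) / 2)

/-- The volume condition `(VD)^m_{C₀}`: `μ(B(x,R))/μ(B(x,r)) ≤ C₀ (R/r)^m`
for all `x` and `0 < r < R`. -/
def VDcond {X : Type*} [MetricSpace X] [MeasurableSpace X]
    (μ : Measure X) (m C₀ : ℝ) : Prop :=
  ∀ x : X, ∀ r R : ℝ, 0 < r → r < R →
    μ (ball x R) ≤ ENNReal.ofReal (C₀ * (R / r) ^ m) * μ (ball x r)

/-- The density condition `(AR)^n_{x₀}`: `liminf_{r → 0} μ(B(x₀,r))/(ω_n r^n) = 1`. -/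
def ARcond {X : Type*} [MetricSpace X] [MeasurableSpace X]
    (μ : Measure X) (x₀ : X) (n : ℕ) : Prop :=
  Filter.liminf (fun r : ℝ => (μ (ball x₀ r)).toReal / (omegaBall n * r ^ n)) (𝓝[>] 0) = 1

/-! ### Local Lipschitz constants -/

/-- The Lipschitz hypothesis keeps the real `limsup` away from its junk values; at an isolated
point the punctured neighbourhood filter is `⊥` and the `limsup` is `0`. -/
lemma locLip_nonneg {X : Type*} [MetricSpace X] {u : X → ℝ} {K : NNReal}
    (hu : LipschitzWith K u) (x : X) : 0 ≤ locLip u x := by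
  unfold locLip
  rcases (𝓝[≠] x).eq_or_neBot with h | h
  · rw [h]; simp [Filter.limsup, Filter.limsSup]
  · refine Filter.le_limsup_of_frequently_le (Filter.Eventually.frequently ?_) ?_
    · exact Filter.Eventually.of_forall fun y => by positivity
    · refine ⟨K, ?_⟩
      simp only [eventually_map]
      refine Filter.Eventually.of_forall fun y => ?_
      apply div_le_of_le_mul₀ dist_nonneg K.2
      have := hu.dist_le_mul y x
      rwa [Real.dist_eq, dist_comm] at this

lemma locLip_le {X : Type*} [MetricSpace X] {u : X → ℝ} {x : X} {L : ℝ} (hL : 0 ≤ L)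
    (h : ∀ ε > 0, ∀ᶠ y in 𝓝 x, |u y - u x| ≤ (L + ε) * dist x y) : locLip u x ≤ L := by
  unfold locLip
  rcases (𝓝[≠] x).eq_or_neBot with h0 | h0
  · rw [h0]; simpa [Filter.limsup, Filter.limsSup] using hL
  · refine le_of_forall_pos_le_add fun ε hε => ?_
    refine Filter.limsup_le_of_le ?_ ?_
    · exact Filter.isCoboundedUnder_le_of_le (x := 0) _ fun y => by positivity
    · refine ((h ε hε).filter_mono nhdsWithin_le_nhds).mono fun y hy => ?_
      exact div_le_of_le_mul₀ dist_nonneg (by positivity) hy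

/-! ### Measures on the half-line and the radial kernel -/

/-- Layer-cake comparison: the superlevel sets of a decreasing continuous function on `(0,∞)` are
intervals `(0,r)`, so its integral is monotone in the distribution function `r ↦ σ((0,r))`. -/
lemma lintegral_le_of_Iio_le {σ₁ σ₂ : Measure ℝ} (h1 : σ₁ (Set.Iic 0) = 0)
    (h2 : σ₂ (Set.Iic 0) = 0)
    (hle : ∀ r : ℝ, 0 < r → σ₁ (Set.Iio r) ≤ σ₂ (Set.Iio r)) {h : ℝ → ℝ} (hm : Measurable h)
    (hnn : ∀ t, 0 < t → 0 ≤ h t) (hanti : AntitoneOn h (Set.Ioi 0))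
    (hcont : ContinuousOn h (Set.Ioi 0)) :
    ∫⁻ t, ENNReal.ofReal (h t) ∂σ₁ ≤ ∫⁻ t, ENNReal.ofReal (h t) ∂σ₂ := by
  have ae : ∀ σ : Measure ℝ, σ (Set.Iic 0) = 0 → ∀ᵐ t ∂σ, 0 < t := by
    intro σ hσ
    rw [ae_iff]; simpa [Set.Iic] using hσ
  have cake : ∀ σ : Measure ℝ, σ (Set.Iic 0) = 0 → ∫⁻ t, ENNReal.ofReal (h t) ∂σ
      = ∫⁻ s in Set.Ioi 0, σ {t | 0 < t ∧ s < h t} := by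
    intro σ hσ
    rw [lintegral_eq_lintegral_meas_lt σ ((ae σ hσ).mono hnn) hm.aemeasurable]
    refine lintegral_congr fun s => measure_congr ?_
    filter_upwards [ae σ hσ] with t ht
    apply propext
    exact ⟨fun h => ⟨ht, h⟩, fun h => h.2⟩
  rw [cake σ₁ h1, cake σ₂ h2]
  refine lintegral_mono fun s => ?_
  set S : Set ℝ := {t | 0 < t ∧ s < h t} with hS
  have hIio : ∀ σ : Measure ℝ, σ (Set.Iic 0) = 0 → ∀ T : Set ℝ, σ (Set.Ioi 0 ∩ T) = σ T := by
    intro σ hσ T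
    refine measure_congr ?_
    filter_upwards [ae σ hσ] with t ht
    exact propext ⟨fun h => h.2, fun h => ⟨ht, h⟩⟩
  have hdown : ∀ t ∈ S, ∀ t', 0 < t' → t' ≤ t → t' ∈ S := fun t ht t' h0 hle =>
    ⟨h0, ht.2.trans_le (hanti h0 ht.1 hle)⟩
  have hopen : ∀ t ∈ S, ∃ t' ∈ S, t < t' := by
    intro t ht
    have h1 : ∀ᶠ t' in 𝓝 t, s < h t' :=
      (hcont.continuousAt (Ioi_mem_nhds ht.1)).eventually (lt_mem_nhds ht.2)
    obtain ⟨t', h2, h3⟩ :=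
      ((h1.filter_mono (nhdsWithin_le_nhds (s := Set.Ioi t))).and self_mem_nhdsWithin).exists
    exact ⟨t', ⟨ht.1.trans h3, h2⟩, h3⟩
  -- `S` is empty, `(0, sup S)`, or `(0,∞)`
  rcases S.eq_empty_or_nonempty with he | hne
  · rw [he]; simp
  by_cases hb : BddAbove S
  · have : S = Set.Ioi 0 ∩ Set.Iio (sSup S) := by
      ext t; constructor
      · intro ht
        obtain ⟨t', h3, h4⟩ := hopen t ht
        exact ⟨ht.1, h4.trans_le (le_csSup hb h3)⟩
      · rintro ⟨h3, h4⟩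
        obtain ⟨t', h5, h6⟩ := exists_lt_of_lt_csSup hne h4
        exact hdown t' h5 t h3 h6.le
    obtain ⟨t, ht⟩ := hne
    rw [this, hIio σ₁ h1, hIio σ₂ h2]
    exact hle _ (ht.1.trans_le (le_csSup hb ht))
  · have : S = Set.Ioi 0 ∩ ⋃ k : ℕ, Set.Iio (k + 1 : ℝ) := by
      ext t; constructor
      · intro ht
        obtain ⟨k, hk⟩ := exists_nat_gt t
        exact ⟨ht.1, Set.mem_iUnion.2 ⟨k, by simp only [Set.mem_Iio]; linarith⟩⟩
      · rintro ⟨h3, -⟩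
        obtain ⟨t', h5, h6⟩ := not_bddAbove_iff.1 hb t
        exact hdown t' h5 t h3 h6.le
    rw [this, hIio σ₁ h1, hIio σ₂ h2]
    have hmono : Monotone fun k : ℕ => Set.Iio (k + 1 : ℝ) := fun i j hij =>
      Set.Iio_subset_Iio (by gcongr)
    rw [hmono.measure_iUnion, hmono.measure_iUnion]
    exact iSup_mono fun k => hle _ (by positivity)

/-- The distribution of the distance to the origin under Lebesgue measure on `ℝ^n`: density
`n ω_n t^{n-1}` on `(0,∞)`. -/
noncomputable def radialMeasure (n : ℕ) : Measure ℝ :=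
  (volume.restrict (Set.Ioi 0)).withDensity fun t => ENNReal.ofReal (n * omegaBall n * t ^ (n - 1))

lemma omegaBall_pos (n : ℕ) : 0 < omegaBall n := by
  unfold omegaBall
  have := Real.Gamma_pos_of_pos (s := (n : ℝ) / 2 + 1) (by positivity)
  positivity

lemma radialMeasure_Iic (n : ℕ) : radialMeasure n (Set.Iic 0) = 0 := by
  apply withDensity_absolutelyContinuous
  rw [Measure.restrict_apply measurableSet_Iic, Set.Iic_inter_Ioi]
  simp

lemma radialMeasure_Iio {n : ℕ} (hn : 1 ≤ n) {r : ℝ} (hr : 0 < r) :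
    radialMeasure n (Set.Iio r) = ENNReal.ofReal (omegaBall n * r ^ n) := by
  have hω := omegaBall_pos n
  unfold radialMeasure
  rw [withDensity_apply _ measurableSet_Iio, Measure.restrict_restrict measurableSet_Iio,
    Set.Iio_inter_Ioi]
  have hF : ∀ t : ℝ, HasDerivAt (fun t => omegaBall n * t ^ n) (n * omegaBall n * t ^ (n - 1)) t := by
    intro t
    have := (hasDerivAt_pow n t).const_mul (omegaBall n)
    rwa [← mul_assoc, mul_comm (omegaBall n)] at this
  have hc : Continuous fun t : ℝ => n * omegaBall n * t ^ (n - 1) := by fun_prop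
  have := intervalIntegral.integral_eq_sub_of_hasDerivAt (fun t _ => hF t)
    (hc.intervalIntegrable 0 r)
  rw [intervalIntegral.integral_of_le hr.le, integral_Ioc_eq_integral_Ioo] at this
  rw [← ofReal_integral_eq_lintegral_ofReal, this]
  · simp [zero_pow (by omega : n ≠ 0)]
  · exact (hc.integrableOn_Icc (a := 0) (b := r)).mono_set Set.Ioo_subset_Icc_self
  · filter_upwards [ae_restrict_mem measurableSet_Ioo] with t ht
    have := ht.1
    simp only [Pi.zero_apply]; positivity

lemma lintegral_radialMeasure (n : ℕ) {h : ℝ → ℝ} (hm : Measurable h) :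
    ∫⁻ t, ENNReal.ofReal (h t) ∂(radialMeasure n) =
      ∫⁻ t in Set.Ioi 0, ENNReal.ofReal (n * omegaBall n * t ^ (n - 1) * h t) := by
  have hω := omegaBall_pos n
  unfold radialMeasure
  rw [lintegral_withDensity_eq_lintegral_mul _ (by fun_prop) (by fun_prop)]
  refine setLIntegral_congr_fun measurableSet_Ioi fun t ht => ?_
  have : (0:ℝ) < t := ht
  simp only [Pi.mul_apply]
  rw [ENNReal.ofReal_mul (p := n * omegaBall n * t ^ (n - 1)) (by positivity)]

lemma lintegral_Ioi_ofReal_of_integral {f : ℝ → ℝ} {c : ℝ}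
    (hnn : ∀ t, 0 < t → 0 ≤ f t) (hf : ∫ t in Set.Ioi 0, f t = c) (hc : 0 < c) :
    ∫⁻ t in Set.Ioi 0, ENNReal.ofReal (f t) = ENNReal.ofReal c := by
  rw [← ofReal_integral_eq_lintegral_ofReal, hf]
  · exact .of_integral_ne_zero (by rw [hf]; exact hc.ne')
  · filter_upwards [ae_restrict_mem measurableSet_Ioi] with t ht using hnn t ht

/-- The kernel `(l + t^b)^{-Q} t^{-e}` in the radius `t > 0`; with `b = 2 - ap` and `e = ap` these
are the integrands produced by the bubbles `(l + d(x₀,·)^b)^{-β}`. -/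
noncomputable def cknKernel (b e Q l t : ℝ) : ℝ := (l + t ^ b) ^ (-Q) * t ^ (-e)

lemma measurable_cknKernel (b e Q l : ℝ) : Measurable (cknKernel b e Q l) := by
  unfold cknKernel; fun_prop

/-- The Euclidean value of the kernel integral: write `(l + t^b)^{-Q}` as
`Γ(Q)⁻¹ ∫ w^{Q-1} e^{-(l + t^b) w} dw` and exchange the two integrals, each of which is then a
Gamma integral. -/
lemma lintegral_cknKernel_radialMeasure {n : ℕ} (hn : 1 ≤ n) {b e Q l : ℝ} (hb : 0 < b)
    (he : e < n) (hQ : (n - e) / b < Q) (hl : 0 < l) :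
    ∫⁻ t, ENNReal.ofReal (cknKernel b e Q l t) ∂(radialMeasure n) =
      ENNReal.ofReal (n * omegaBall n / b * Real.Gamma ((n - e) / b) *
        Real.Gamma (Q - (n - e) / b) / Real.Gamma Q * l ^ (-(Q - (n - e) / b))) := by
  have hω := omegaBall_pos n
  have hn0 : (0 : ℝ) < n := by exact_mod_cast hn
  have hm0 : 0 < (n - e) / b := by apply div_pos <;> linarith
  have hQ0 : 0 < Q := hm0.trans hQ
  have hΓQ := Real.Gamma_pos_of_pos hQ0
  have hΓ1 := Real.Gamma_pos_of_pos hm0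
  have hΓ2 := Real.Gamma_pos_of_pos (sub_pos.2 hQ)
  rw [lintegral_radialMeasure n (measurable_cknKernel b e Q l)]
  have step1 : ∀ t ∈ Set.Ioi (0:ℝ), ENNReal.ofReal (n * omegaBall n * t ^ (n - 1) * cknKernel b e Q l t)
      = ∫⁻ w in Set.Ioi 0, ENNReal.ofReal (n * omegaBall n / Real.Gamma Q *
        (w ^ (Q - 1) * Real.exp (-(l * w))) * (t ^ (n - 1 - e) * Real.exp (-w * t ^ b))) := by
    intro t ht
    have ht : 0 < t := ht
    have htb : 0 < l + t ^ b := by positivity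
    symm
    apply lintegral_Ioi_ofReal_of_integral
    · intro w hw; positivity
    · have h1 := Real.integral_rpow_mul_exp_neg_mul_Ioi hQ0 htb
      have h2 : ∀ w : ℝ, n * omegaBall n / Real.Gamma Q *
        (w ^ (Q - 1) * Real.exp (-(l * w))) * (t ^ (n - 1 - e) * Real.exp (-w * t ^ b)) =
        (n * omegaBall n / Real.Gamma Q * t ^ (n - 1 - e)) *
          (w ^ (Q - 1) * Real.exp (-((l + t ^ b) * w))) := by
        intro w
        rw [show -((l + t ^ b) * w) = -(l * w) + -w * t ^ b by ring, Real.exp_add]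
        ring
      simp_rw [h2]
      rw [integral_const_mul, h1, one_div, Real.inv_rpow htb.le, ← Real.rpow_neg htb.le, cknKernel]
      rw [show (n : ℝ) - 1 - e = ((n - 1 : ℕ) : ℝ) + -e by push_cast [hn]; ring,
        Real.rpow_add ht, Real.rpow_natCast]
      field_simp
    · unfold cknKernel; positivity
  rw [setLIntegral_congr_fun measurableSet_Ioi step1, lintegral_lintegral_swap]
  · have step2 : ∀ w ∈ Set.Ioi (0:ℝ), ∫⁻ t in Set.Ioi 0, ENNReal.ofReal (n * omegaBall n / Real.Gamma Q *
        (w ^ (Q - 1) * Real.exp (-(l * w))) * (t ^ (n - 1 - e) * Real.exp (-w * t ^ b))) =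
        ENNReal.ofReal (n * omegaBall n / Real.Gamma Q * (1 / b) * Real.Gamma ((n - e) / b) *
        (w ^ (Q - (n - e) / b - 1) * Real.exp (-(l * w)))) := by
      intro w hw
      have hw : 0 < w := hw
      apply lintegral_Ioi_ofReal_of_integral
      · intro t ht; positivity
      · rw [integral_const_mul, integral_rpow_mul_exp_neg_mul_rpow hb (by linarith) hw]
        rw [show (n : ℝ) - 1 - e + 1 = n - e by ring,
          show Q - (n - e) / b - 1 = Q - 1 + -(n - e) / b by ring, Real.rpow_add hw]
        ring
      · positivity
    rw [setLIntegral_congr_fun measurableSet_Ioi step2]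
    apply lintegral_Ioi_ofReal_of_integral
    · intro w hw; positivity
    · rw [integral_const_mul, Real.integral_rpow_mul_exp_neg_mul_Ioi (sub_pos.2 hQ) hl,
        one_div l, Real.inv_rpow hl.le, ← Real.rpow_neg hl.le]
      ring
    · positivity
  · apply Measurable.aemeasurable
    unfold Function.uncurry
    fun_prop

lemma cknKernel_nonneg {b e Q l t : ℝ} (hl : 0 < l) (ht : 0 < t) : 0 ≤ cknKernel b e Q l t := by
  unfold cknKernel; positivity

lemma antitoneOn_cknKernel {b e Q l : ℝ} (hb : 0 < b) (he : 0 ≤ e) (hQ : 0 ≤ Q) (hl : 0 < l) :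
    AntitoneOn (cknKernel b e Q l) (Set.Ioi 0) := by
  intro s hs t ht hst
  have hs : 0 < s := hs
  have ht : 0 < t := ht
  unfold cknKernel
  have h1 : l + s ^ b ≤ l + t ^ b := by gcongr
  have h2 : (l + t ^ b) ^ (-Q) ≤ (l + s ^ b) ^ (-Q) :=
    Real.rpow_le_rpow_of_nonpos (by positivity) h1 (by linarith)
  have h3 : t ^ (-e) ≤ s ^ (-e) := Real.rpow_le_rpow_of_nonpos hs hst (by linarith)
  gcongr

lemma continuousOn_cknKernel {b e Q l : ℝ} (hl : 0 < l) :
    ContinuousOn (cknKernel b e Q l) (Set.Ioi 0) := by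
  intro t ht
  have ht : 0 < t := ht
  apply ContinuousAt.continuousWithinAt
  unfold cknKernel
  have h1 : ContinuousAt (fun t : ℝ => t ^ b) t := Real.continuousAt_rpow_const _ _ (.inl ht.ne')
  have h2 : ContinuousAt (fun t : ℝ => t ^ (-e)) t := Real.continuousAt_rpow_const _ _ (.inl ht.ne')
  refine ContinuousAt.mul (ContinuousAt.rpow_const (by fun_prop) (.inl ?_)) h2
  positivity

/-! ### Testing the inequality with radial functions -/

/-- The inequality extends to a positive decreasing `C¹` radial profile `f` that vanishes at
infinity, with no assumption at `0`: clamp the radius to `[1/(k+1), k+1]`, subtract the boundary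
value `f (k+1)` to get a compactly supported Lipschitz function, and let `k → ∞` by Fatou. -/
lemma ckn_radial {X : Type*} [MetricSpace X] [ProperSpace X] [MeasurableSpace X] [BorelSpace X]
    {μ : Measure X} {x₀ : X} {a p C : ℝ} (hp : 0 < p) (hCKN : CKNineq μ x₀ a p C)
    (hx₀ : ∀ᵐ x ∂μ, 0 < dist x₀ x) {f f' : ℝ → ℝ} (hanti : AntitoneOn f (Set.Ioi 0))
    (hpos : ∀ t, 0 < t → 0 < f t) (hlim : Tendsto f atTop (𝓝 0))
    (hder : ∀ t, 0 < t → HasDerivAt f (f' t) t) (hcont : ContinuousOn f' (Set.Ioi 0)) :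
    (∫⁻ x, ENNReal.ofReal (f (dist x₀ x) ^ p / dist x₀ x ^ (a * p)) ∂μ) ^ (1 / p) ≤
      ENNReal.ofReal C * (∫⁻ x, ENNReal.ofReal (f' (dist x₀ x) ^ 2) ∂μ) ^ ((1 : ℝ) / 2) := by
  set M := ENNReal.ofReal C * (∫⁻ x, ENNReal.ofReal (f' (dist x₀ x) ^ 2) ∂μ) ^ ((1 : ℝ) / 2)
    with hM
  have hk : ∀ k : ℕ, ((k : ℝ) + 1)⁻¹ ≤ (k : ℝ) + 1 := fun k =>
    (inv_le_one_of_one_le₀ (by linarith [k.cast_nonneg (α := ℝ)])).trans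
      (by linarith [k.cast_nonneg (α := ℝ)])
  let u : ℕ → X → ℝ := fun k x =>
    f (Set.projIcc ((k : ℝ) + 1)⁻¹ ((k : ℝ) + 1) (hk k) (dist x₀ x)) - f ((k : ℝ) + 1)
  have hsub : ∀ k : ℕ, Set.Icc ((k : ℝ) + 1)⁻¹ ((k : ℝ) + 1) ⊆ Set.Ioi 0 := fun k t ht =>
    lt_of_lt_of_le (by positivity) ht.1
  have hLip : ∀ k, ∃ K : NNReal, LipschitzWith K (u k) := by
    intro k
    obtain ⟨B, hB⟩ := isCompact_Icc.exists_bound_of_continuousOn (hcont.mono (hsub k))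
    have h1 : LipschitzOnWith (Real.toNNReal B) f (Set.Icc ((k : ℝ) + 1)⁻¹ ((k : ℝ) + 1)) := by
      refine (convex_Icc _ _).lipschitzOnWith_of_nnnorm_hasDerivWithin_le
        (fun t ht => (hder t (hsub k ht)).hasDerivWithinAt) fun t ht => ?_
      rw [← NNReal.coe_le_coe, coe_nnnorm]
      exact (hB t ht).trans (Real.le_coe_toNNReal B)
    have h2 := (h1.to_restrict.comp (LipschitzWith.projIcc (hk k))).comp (LipschitzWith.dist_right x₀)
    refine ⟨_, ((h2.sub (LipschitzWith.const (f ((k : ℝ) + 1)))))⟩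
  have hsupp : ∀ k, HasCompactSupport (u k) := by
    intro k
    refine HasCompactSupport.of_support_subset_isCompact (isCompact_closedBall x₀ ((k : ℝ) + 1)) ?_
    intro x hx
    by_contra h
    simp only [mem_closedBall, not_le, dist_comm x x₀] at h
    apply hx
    simp only [u, Set.projIcc_of_right_le (hk k) h.le, sub_self]
  have hdiff : ∀ (k : ℕ) (s t : ℝ), 0 < s → 0 < t →
      |f (Set.projIcc ((k : ℝ) + 1)⁻¹ ((k : ℝ) + 1) (hk k) s) -
        f (Set.projIcc ((k : ℝ) + 1)⁻¹ ((k : ℝ) + 1) (hk k) t)| ≤ |f s - f t| := by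
    intro k s t hs ht
    -- clamping the argument of `f` amounts to clamping its value
    have h1 : ∀ t, 0 < t → f (Set.projIcc ((k : ℝ) + 1)⁻¹ ((k : ℝ) + 1) (hk k) t) =
        min (f ((k : ℝ) + 1)⁻¹) (max (f ((k : ℝ) + 1)) (f t)) := by
      intro t ht
      have hmin : 0 < min ((k : ℝ) + 1) t := lt_min (by positivity) ht
      have ha := hanti.map_max (a := ((k : ℝ) + 1)⁻¹) (b := min ((k : ℝ) + 1) t)
        (by simp only [Set.mem_Ioi]; positivity) hmin
      have hb := hanti.map_min (a := (k : ℝ) + 1) (b := t)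
        (by simp only [Set.mem_Ioi]; positivity) ht
      rw [Set.coe_projIcc, ha, hb]
    rw [h1 s hs, h1 t ht]
    refine (abs_min_sub_min_le_max _ _ _ _).trans ?_
    simp only [sub_self, abs_zero]
    refine max_le (abs_nonneg _) ((abs_max_sub_max_le_max _ _ _ _).trans ?_)
    simp
  have hloc : ∀ k x, 0 < dist x₀ x → locLip (u k) x ≤ |f' (dist x₀ x)| := by
    intro k x hx
    refine locLip_le (abs_nonneg _) fun ε hε => ?_
    have h1 := (hasDerivAt_iff_isLittleO.1 (hder _ hx)).def hε
    have hc : ContinuousAt (fun y => dist x₀ y) x := by fun_prop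
    have h2 := hc.eventually h1
    have h3 := hc.eventually (lt_mem_nhds hx)
    filter_upwards [h2, h3] with y hy hy0
    simp only [u, sub_sub_sub_cancel_right]
    refine (hdiff k _ _ hy0 hx).trans ?_
    simp only [Real.norm_eq_abs, smul_eq_mul] at hy
    have h4 : |dist x₀ y - dist x₀ x| ≤ dist x y := by
      rw [dist_comm x₀ y, dist_comm x₀ x, dist_comm x y]; exact abs_dist_sub_le y x x₀
    calc |f (dist x₀ y) - f (dist x₀ x)|
        ≤ |f (dist x₀ y) - f (dist x₀ x) - (dist x₀ y - dist x₀ x) * f' (dist x₀ x)| +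
          |(dist x₀ y - dist x₀ x) * f' (dist x₀ x)| := by
          have := abs_add_le (f (dist x₀ y) - f (dist x₀ x) - (dist x₀ y - dist x₀ x) * f' (dist x₀ x))
            ((dist x₀ y - dist x₀ x) * f' (dist x₀ x))
          rwa [sub_add_cancel] at this
      _ ≤ ε * |dist x₀ y - dist x₀ x| + |dist x₀ y - dist x₀ x| * |f' (dist x₀ x)| := by
          rw [abs_mul]; gcongr
      _ = (|f' (dist x₀ x)| + ε) * |dist x₀ y - dist x₀ x| := by ring
      _ ≤ _ := by gcongr
  have hineq : ∀ k, ∫⁻ x, ENNReal.ofReal (|u k x| ^ p / dist x₀ x ^ (a * p)) ∂μ ≤ M ^ p := by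
    intro k
    have h1 := hCKN (u k) (hLip k) (hsupp k)
    obtain ⟨K, hK⟩ := hLip k
    have h2 : ∫⁻ x, ENNReal.ofReal (locLip (u k) x ^ 2) ∂μ ≤
        ∫⁻ x, ENNReal.ofReal (f' (dist x₀ x) ^ 2) ∂μ := by
      refine lintegral_mono_ae ?_
      filter_upwards [hx₀] with x hx
      apply ENNReal.ofReal_le_ofReal
      rw [← sq_abs (f' _)]
      exact pow_le_pow_left₀ (locLip_nonneg hK x) (hloc k x hx) 2
    have h3 := h1.trans (mul_le_mul_right (ENNReal.rpow_le_rpow h2 (by norm_num)) _)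
    rw [← hM, one_div, ENNReal.rpow_inv_le_iff hp] at h3
    exact h3
  rw [one_div, ENNReal.rpow_inv_le_iff hp]
  have htend : ∀ᵐ x ∂μ, ENNReal.ofReal (f (dist x₀ x) ^ p / dist x₀ x ^ (a * p)) =
      liminf (fun k => ENNReal.ofReal (|u k x| ^ p / dist x₀ x ^ (a * p))) atTop := by
    filter_upwards [hx₀] with x hx
    symm
    apply Tendsto.liminf_eq
    apply ENNReal.tendsto_ofReal
    apply Tendsto.div_const
    apply Tendsto.rpow_const _ (.inr hp.le)
    rw [← abs_of_pos (hpos _ hx)]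
    apply Tendsto.abs
    have hk1 : Tendsto (fun k : ℕ => (k : ℝ) + 1) atTop atTop :=
      tendsto_atTop_add_const_right _ _ tendsto_natCast_atTop_atTop
    have h1 : Tendsto (fun k : ℕ => f (dist x₀ x) - f ((k : ℝ) + 1)) atTop (𝓝 (f (dist x₀ x))) := by
      simpa using (hlim.comp hk1).const_sub (f (dist x₀ x))
    refine h1.congr' ?_
    filter_upwards [hk1.eventually_ge_atTop (dist x₀ x),
      (tendsto_inv_atTop_zero.comp hk1).eventually (ge_mem_nhds hx)] with k hk2 hk3
    simp only [u]
    rw [Set.projIcc_of_mem (hk k) ⟨hk3, hk2⟩]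
  rw [lintegral_congr_ae htend]
  refine (lintegral_liminf_le fun k => ?_).trans ?_
  · obtain ⟨K, hK⟩ := hLip k
    have := hK.continuous.measurable
    fun_prop
  · exact Filter.liminf_le_of_le (by isBoundedDefault) fun c hc => by
      obtain ⟨k, hk⟩ := hc.exists
      exact hk.trans (hineq k)

/-- The inequality for the bubble `(l + d(x₀,·)^b)^{-β}`, as an inequality for the distribution of
`d(x₀,·)`. The exponents are such that both sides involve the kernel of the same order `q`. -/
lemma ckn_bubble {X : Type*} [MetricSpace X] [ProperSpace X] [MeasurableSpace X] [BorelSpace X]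
    {μ : Measure X} {x₀ : X} {a p C : ℝ} (hp : 0 < p) (hCKN : CKNineq μ x₀ a p C)
    (hx₀ : ∀ᵐ x ∂μ, 0 < dist x₀ x) {b q β l : ℝ} (hb : 0 < b) (hβ : 0 < β) (hl : 0 < l)
    (hbe : b = 2 - a * p) (hβp : β * p = q) (hβq : 2 * β + 2 = q) :
    (∫⁻ t, ENNReal.ofReal (cknKernel b (a * p) q l t) ∂(μ.map (dist x₀))) ^ (1 / p) ≤
      ENNReal.ofReal C * (∫⁻ t, ENNReal.ofReal ((b * β) ^ 2 * (t ^ b * cknKernel b (a * p) q l t))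
        ∂(μ.map (dist x₀))) ^ ((1 : ℝ) / 2) := by
  have hd : Measurable (dist x₀) := by fun_prop
  have hm := measurable_cknKernel b (a * p) q l
  have hlt : ∀ t : ℝ, 0 < t → 0 < l + t ^ b := fun t ht => by positivity
  rw [lintegral_map (by fun_prop) hd, lintegral_map (by fun_prop) hd]
  have key := ckn_radial hp hCKN hx₀ (f := fun t => (l + t ^ b) ^ (-β))
    (f' := fun t => b * t ^ (b - 1) * (-β) * (l + t ^ b) ^ (-β - 1)) ?_ ?_ ?_ ?_ ?_
  · convert key using 2
    · refine lintegral_congr_ae ?_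
      filter_upwards [hx₀] with x hx
      have := hlt _ hx
      rw [cknKernel, ← Real.rpow_mul this.le, Real.rpow_neg hx.le, ← div_eq_mul_inv,
        neg_mul, hβp]
    · congr 1
      refine lintegral_congr_ae ?_
      filter_upwards [hx₀] with x hx
      have := hlt _ hx
      congr 1
      rw [cknKernel, show -(a * p) = b - 2 by linarith]
      simp only [mul_pow]
      rw [← Real.rpow_mul_natCast hx.le, ← Real.rpow_mul_natCast this.le, ← hβq,
        show (b - 1) * ((2 : ℕ) : ℝ) = b + (b - 2) by push_cast; ring,
        show (-β - 1) * ((2 : ℕ) : ℝ) = -(2 * β + 2) by push_cast; ring, Real.rpow_add hx]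
      ring
  · intro s hs t ht hst
    have hs : 0 < s := hs
    have := hlt s hs
    exact Real.rpow_le_rpow_of_nonpos this (by gcongr) (by linarith)
  · intro t ht
    have := hlt t ht
    positivity
  · exact (tendsto_rpow_neg_atTop hβ).comp
      (tendsto_atTop_add_const_left _ _ (tendsto_rpow_atTop hb))
  · intro t ht
    have h1 := (Real.hasDerivAt_rpow_const (p := b) (.inl ht.ne')).const_add l
    exact h1.rpow_const (.inl (hlt t ht).ne')
  · intro t ht
    have ht : 0 < t := ht
    apply ContinuousAt.continuousWithinAt
    have h1 : ContinuousAt (fun t : ℝ => t ^ b) t := Real.continuousAt_rpow_const _ _ (.inl ht.ne')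
    have h2 : ContinuousAt (fun t : ℝ => t ^ (b - 1)) t :=
      Real.continuousAt_rpow_const _ _ (.inl ht.ne')
    exact ((h2.const_mul b).mul_const _).mul
      (ContinuousAt.rpow_const (by fun_prop) (.inl (hlt t ht).ne'))

/-! ### The differential inequality and the sharp constant -/

/-- With `φ(l) = l^β H(l)`, the condition `φ'(l) ≤ 0` forces a lower bound on `Y l`, which
inserted into `hineq` gives `φ(l) ≥ T` by `hT`. Thus `φ' > 0` wherever `φ < T`; since `φ` takes
values close to `T` or larger at arbitrarily small `l`, it never drops below `T`. -/
lemma ode_comparison {H Y : ℝ → ℝ} {β p D T : ℝ} (hβ : 0 < β) (hp : 0 < p)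
    (hβp : β * p = 2 * β + 2) (hD : 0 < D)
    (hH : ∀ l, 0 < l → 0 < H l)
    (hder : ∀ l, 0 < l → HasDerivAt H (-(2 * β + 1) * Y l) l)
    (hineq : ∀ l, 0 < l → Y l ^ (2 / p) ≤ D * (H l - l * Y l))
    (hT : ∀ ψ, 0 < ψ → ψ ^ (2 / p) ≤ D * ((β + 1) / β) * ψ → β / (2 * β + 1) * T ≤ ψ)
    (hsmall : ∀ v, v < T → ∀ δ, 0 < δ → ∃ l, 0 < l ∧ l < δ ∧ v < l ^ β * H l) :
    ∀ l, 0 < l → T ≤ l ^ β * H l := by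
  have hφ : ∀ l, 0 < l → HasDerivAt (fun l => l ^ β * H l)
      (β * l ^ (β - 1) * H l + l ^ β * (-(2 * β + 1) * Y l)) l := fun l hl =>
    (Real.hasDerivAt_rpow_const (.inl hl.ne')).mul (hder l hl)
  have hpos : ∀ l, 0 < l → l ^ β * H l < T →
      0 < β * l ^ (β - 1) * H l + l ^ β * (-(2 * β + 1) * Y l) := by
    intro l hl hlt
    by_contra! hcon
    have hHl := hH l hl
    have hlb : l ^ β = l ^ (β - 1) * l := by
      rw [Real.rpow_sub_one hl.ne']; field_simp
    have h1 : β * H l ≤ (2 * β + 1) * l * Y l := by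
      rw [hlb] at hcon
      have h2 : 0 < l ^ (β - 1) := by positivity
      have h3 : l ^ (β - 1) * (β * H l - (2 * β + 1) * l * Y l) ≤ 0 := by linarith
      have h4 := nonpos_of_mul_nonpos_right h3 h2
      linarith
    -- `y` is the value of `Y l` at which `φ'` would vanish
    set y := β / (2 * β + 1) * H l / l with hy
    have hy0 : 0 < y := by positivity
    have hyY : y ≤ Y l := by
      rw [hy, div_mul_eq_mul_div, div_div, div_le_iff₀ (by positivity)]; linarith
    have h2 : y ^ (2 / p) ≤ D * (H l - l * y) := calc
      y ^ (2 / p) ≤ Y l ^ (2 / p) := by gcongr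
      _ ≤ D * (H l - l * Y l) := hineq l hl
      _ ≤ _ := by gcongr
    have hψ : 0 < l ^ (β + 1) * y := by positivity
    have h3 := hT (l ^ (β + 1) * y) hψ ?_
    · have h4 : l ^ (β + 1) * y = β / (2 * β + 1) * (l ^ β * H l) := by
        rw [Real.rpow_add_one hl.ne', hy]; field_simp
      rw [h4] at h3
      have h5 := le_of_mul_le_mul_left h3 (by positivity)
      linarith
    · rw [Real.mul_rpow (by positivity) hy0.le, ← Real.rpow_mul hl.le,
        show (β + 1) * (2 / p) = β by field_simp; linarith]
      calc l ^ β * y ^ (2 / p) ≤ l ^ β * (D * (H l - l * y)) := by gcongr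
        _ = D * ((β + 1) / β) * (l ^ (β + 1) * y) := by
          rw [Real.rpow_add_one hl.ne', hy]; field_simp; ring
  intro l₀ hl₀
  by_contra! hcon
  obtain ⟨l₁, hl₁, hlt, hv⟩ := hsmall _ hcon l₀ hl₀
  -- at a minimum `m > l₁` of `φ` on `[l₁, l₀]` the left difference quotients are nonpositive
  obtain ⟨m, hm, hmin⟩ := isCompact_Icc.exists_isMinOn (Set.nonempty_Icc.2 hlt.le)
    (f := fun l => l ^ β * H l)
    (fun l hl => (hφ l (hl₁.trans_le hl.1)).continuousAt.continuousWithinAt)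
  have hm0 : 0 < m := hl₁.trans_le hm.1
  have hmle : m ^ β * H m ≤ l₀ ^ β * H l₀ := hmin (Set.right_mem_Icc.2 hlt.le)
  have hm1 : l₁ < m := by
    refine lt_of_le_of_ne hm.1 fun h => ?_
    rw [← h] at hmle; linarith
  have hd := hpos m hm0 (hmle.trans_lt hcon)
  have hev := (hφ m hm0).hasDerivWithinAt (s := Set.Iio m)
  rw [hasDerivWithinAt_iff_tendsto_slope' (by simp)] at hev
  obtain ⟨x, hx, hx1, hx2⟩ := ((hev.eventually (lt_mem_nhds hd)).and
    (Ioo_mem_nhdsLT hm1)).exists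
  have hx3 : m ^ β * H m ≤ x ^ β * H x := hmin ⟨hx1.le, hx2.le.trans hm.2⟩
  rw [slope_def_field] at hx
  have : (x ^ β * H x - m ^ β * H m) / (x - m) ≤ 0 :=
    div_nonpos_of_nonneg_of_nonpos (by linarith) (by linarith)
  linarith

lemma cknConst_pos {n : ℕ} {a p b β : ℝ} (hb : 0 < b) (hβ : 0 < β)
    (hbe : b = 2 - a * p) (hbβ : b * β = n - 2) : 0 < CKNconst n a p := by
  have h1 : (n : ℝ) - a * p = b * (β + 1) := by linarith
  have h2 : 2 * (n : ℝ) - 2 * a * p = 2 * (b * (β + 1)) := by linarith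
  have hn : (0 : ℝ) < n := by nlinarith [mul_pos hb hβ]
  have hω := omegaBall_pos n
  unfold CKNconst
  rw [h2, h1, ← hbβ, ← hbe]
  have h3 := Real.Gamma_pos_of_pos (s := 2 * (b * (β + 1)) / b) (by positivity)
  have h4 := Real.Gamma_pos_of_pos (s := b * (β + 1) / b) (by positivity)
  positivity

/-- The equality case of the hypothesis is `ψ = M^{-(β+1)}` with `M = C² bβ · b(β+1)`; the
definition of `CKNconst` says exactly that this number is the left-hand side of the conclusion. -/
lemma cknConst_threshold {n : ℕ} {a p b β C : ℝ} (hb : 0 < b) (hβ : 0 < β) (hp : 0 < p)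
    (hbe : b = 2 - a * p) (hbβ : b * β = n - 2) (hβp : β * p = 2 * β + 2) (hC : 0 < C)
    {ψ : ℝ} (hψ : 0 < ψ) (h : ψ ^ (2 / p) ≤ (C * (b * β)) ^ 2 * ((β + 1) / β) * ψ) :
    β / (2 * β + 1) * ((CKNconst n a p / C) ^ (2 * β + 2) *
      (n * omegaBall n / b * Real.Gamma (β + 1) * Real.Gamma β / Real.Gamma (2 * β + 1))) ≤ ψ := by
  have hK := cknConst_pos hb hβ hbe hbβ
  have h1 : (n : ℝ) - a * p = b * (β + 1) := by linarith
  have h2 : 2 * (n : ℝ) - 2 * a * p = 2 * (b * (β + 1)) := by linarith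
  have hn : (0 : ℝ) < n := by nlinarith [mul_pos hb hβ]
  have hω := omegaBall_pos n
  have hΓ1 := Real.Gamma_pos_of_pos hβ
  have hΓ2 := Real.Gamma_pos_of_pos (s := 2 * β + 1) (by positivity)
  have e1 : Real.Gamma (β + 1) = β * Real.Gamma β := Real.Gamma_add_one hβ.ne'
  have e2 : Real.Gamma (2 * β + 2) = (2 * β + 1) * Real.Gamma (2 * β + 1) := by
    rw [← Real.Gamma_add_one (by positivity)]; congr 1; ring
  set M := C ^ 2 * ((b * β) * (b * (β + 1))) with hM
  have hM0 : 0 < M := by positivity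
  have hKq : CKNconst n a p ^ (2 * β + 2) = ((b * β) * (b * (β + 1))) ^ (-(β + 1)) *
      (b * Real.Gamma (2 * β + 2) / (n * omegaBall n * Real.Gamma (β + 1) ^ 2)) := by
    unfold CKNconst
    rw [h2, h1, ← hbβ, ← hbe, show 2 * (b * (β + 1)) / b = 2 * β + 2 by field_simp,
      show b * (β + 1) / b = β + 1 by field_simp,
      show b / (2 * (b * (β + 1))) = (2 * β + 2)⁻¹ by field_simp]
    have hG := Real.Gamma_pos_of_pos (s := 2 * β + 2) (by positivity)
    have hG' := Real.Gamma_pos_of_pos (s := β + 1) (by positivity)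
    rw [Real.mul_rpow (by positivity) (by positivity), Real.rpow_inv_rpow (by positivity) (by positivity),
      ← Real.rpow_mul (by positivity), one_div, Real.inv_rpow (by positivity),
      ← Real.rpow_neg (by positivity)]
    congr 2; ring
  have hCq : C ^ (2 * β + 2) = (C ^ 2) ^ (β + 1) := by
    rw [← Real.rpow_natCast_mul hC.le]; congr 1; push_cast; ring
  have hlhs : β / (2 * β + 1) * ((CKNconst n a p / C) ^ (2 * β + 2) *
      (n * omegaBall n / b * Real.Gamma (β + 1) * Real.Gamma β / Real.Gamma (2 * β + 1))) =
      M ^ (-(β + 1)) := by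
    rw [Real.div_rpow hK.le hC.le, hKq, hCq, hM,
      Real.mul_rpow (x := C ^ 2) (by positivity) (by positivity), e1, e2,
      Real.rpow_neg (x := C ^ 2) (by positivity)]
    field_simp
  rw [hlhs]
  have hexp : 2 / p = 1 + -(β + 1)⁻¹ := by field_simp; linarith
  rw [hexp, Real.rpow_add hψ, Real.rpow_one, mul_comm] at h
  have h3 : ψ ^ (-(β + 1)⁻¹) ≤ M := by
    refine (le_of_mul_le_mul_right h hψ).trans_eq ?_
    rw [hM]; field_simp
  have h4 : M ^ (-(β + 1)) ≤ (ψ ^ (-(β + 1)⁻¹)) ^ (-(β + 1)) :=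
    Real.rpow_le_rpow_of_nonpos (by positivity) h3 (by linarith)
  rwa [← Real.rpow_mul hψ.le, neg_mul_neg, inv_mul_cancel₀ (by positivity), Real.rpow_one] at h4

/-! ### Kernel integrals as functions of the scale -/

lemma cknKernel_succ {b e Q l t : ℝ} (hl : 0 < l) (ht : 0 < t) :
    cknKernel b e Q l t = (l + t ^ b) * cknKernel b e (Q + 1) l t := by
  have : 0 < l + t ^ b := by positivity
  unfold cknKernel
  rw [show -Q = 1 + -(Q + 1) by ring, Real.rpow_add this, Real.rpow_one]; ring

lemma integrable_cknKernel_succ {σ : Measure ℝ} (hσ : ∀ᵐ t ∂σ, 0 < t) {b e Q l : ℝ} (hl : 0 < l)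
    (h : Integrable (cknKernel b e Q l) σ) : Integrable (cknKernel b e (Q + 1) l) σ := by
  refine (h.const_mul l⁻¹).mono' (measurable_cknKernel _ _ _ _).aestronglyMeasurable ?_
  filter_upwards [hσ] with t ht
  have h0 := cknKernel_nonneg (b := b) (e := e) (Q := Q + 1) hl ht
  rw [Real.norm_of_nonneg h0, cknKernel_succ (Q := Q) hl ht, ← mul_assoc]
  refine le_mul_of_one_le_left h0 ?_
  rw [← div_eq_inv_mul, one_le_div hl]
  have : 0 < t ^ b := by positivity
  linarith

lemma hasDerivAt_integral_cknKernel {σ : Measure ℝ} (hσ : ∀ᵐ t ∂σ, 0 < t) {b e Q l : ℝ}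
    (hQ : 0 ≤ Q) (hl : 0 < l) (h : ∀ l, 0 < l → Integrable (cknKernel b e Q l) σ) :
    HasDerivAt (fun l => ∫ t, cknKernel b e Q l t ∂σ) (-Q * ∫ t, cknKernel b e (Q + 1) l t ∂σ) l := by
  rw [← integral_const_mul]
  refine (hasDerivAt_integral_of_dominated_loc_of_deriv_le
    (F := fun l t => cknKernel b e Q l t)
    (F' := fun l t => -Q * cknKernel b e (Q + 1) l t)
    (bound := fun t => Q * cknKernel b e (Q + 1) (l / 2) t) (Ioi_mem_nhds (half_lt_self hl))
    (Eventually.of_forall fun l => (measurable_cknKernel _ _ _ _).aestronglyMeasurable) (h l hl)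
    ((measurable_cknKernel _ _ _ _).const_mul _).aestronglyMeasurable ?_
    ((integrable_cknKernel_succ hσ (half_pos hl) (h _ (half_pos hl))).const_mul _) ?_).2
  · filter_upwards [hσ] with t ht l' hl'
    have hl' : l / 2 < l' := hl'
    have hl'0 : 0 < l' := (half_pos hl).trans hl'
    rw [norm_mul, norm_neg, Real.norm_of_nonneg hQ, Real.norm_of_nonneg (cknKernel_nonneg hl'0 ht)]
    unfold cknKernel
    have : (l' + t ^ b) ^ (-(Q + 1)) ≤ (l / 2 + t ^ b) ^ (-(Q + 1)) :=
      Real.rpow_le_rpow_of_nonpos (by positivity) (by gcongr) (by linarith)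
    gcongr
  · filter_upwards [hσ] with t ht l' hl'
    have hl' : l / 2 < l' := hl'
    have hl'0 : 0 < l' := (half_pos hl).trans hl'
    unfold cknKernel
    have h1 := (((hasDerivAt_id l').add_const (t ^ b)).rpow_const (p := -Q)
      (.inl (by simp only [id]; positivity))).mul_const (t ^ (-e))
    convert! h1 using 1
    simp only [id, one_mul]
    rw [show -(Q + 1) = -Q - 1 by ring]; ring

lemma ae_pos_of_Iic {σ : Measure ℝ} (hσ : σ (Set.Iic 0) = 0) : ∀ᵐ t ∂σ, 0 < t := by
  rw [ae_iff]; simpa [Set.Iic] using hσ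

/-- As `l → 0` the kernel concentrates at `t = 0`: if near `0` the measure `σ` is at least `c`
times the model `ρ` for every `c < 1`, then `l^β H(l)` exceeds every `v < h₀` at arbitrarily small
`l`. -/
lemma lintegral_cknKernel_small {σ ρ : Measure ℝ} (hσ : σ (Set.Iic 0) = 0) (hρ : ρ (Set.Iic 0) = 0)
    {b e Q β h₀ : ℝ} (hb : 0 < b) (he : 0 ≤ e) (hQ : 0 < Q) (hβ : 0 < β) (hh₀ : 0 < h₀)
    (hE : ∀ l, 0 < l → ∫⁻ t, ENNReal.ofReal (cknKernel b e Q l t) ∂ρ = ENNReal.ofReal (h₀ * l ^ (-β)))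
    {H : ℝ → ℝ} (hH0 : ∀ l, 0 < l → 0 < H l)
    (hH : ∀ l, 0 < l → ∫⁻ t, ENNReal.ofReal (cknKernel b e Q l t) ∂σ = ENNReal.ofReal (H l))
    (hAR : ∀ c, 0 < c → c < 1 → ∃ d > 0, ∀ r, 0 < r → r < d →
      ENNReal.ofReal c * ρ (Set.Iio r) ≤ σ (Set.Iio r))
    {v : ℝ} (hv : v < h₀) {δ : ℝ} (hδ : 0 < δ) : ∃ l, 0 < l ∧ l < δ ∧ v < l ^ β * H l := by
  obtain ⟨c, hc0, hc1⟩ := exists_between (max_lt ((div_lt_one hh₀).2 hv) zero_lt_one)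
  have hcv : v < c * h₀ := (div_lt_iff₀ hh₀).1 ((le_max_left _ _).trans_lt hc0)
  replace hc0 : 0 < c := (le_max_right _ _).trans_lt hc0
  obtain ⟨d₀, hd₀, hd⟩ := hAR c hc0 hc1
  set d := d₀ / 2
  have hdpos : 0 < d := by positivity
  have hdd : d < d₀ := half_lt_self hd₀
  have hdb : 0 < d ^ b := by positivity
  set k := d ^ b / (1 + d ^ b) with hk
  have hk0 : 0 < k := by positivity
  have hker : ∀ l t, 0 < l → d ≤ t → cknKernel b e Q l t ≤ k ^ (-Q) * cknKernel b e Q 1 t := by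
    intro l t hl ht
    have ht0 : 0 < t := hdpos.trans_le ht
    have h1 : d ^ b ≤ t ^ b := by gcongr
    have h2 : k * (1 + t ^ b) ≤ l + t ^ b := by
      rw [hk, div_mul_eq_mul_div, div_le_iff₀ (by positivity)]
      nlinarith
    unfold cknKernel
    rw [← mul_assoc, ← Real.mul_rpow hk0.le (by positivity)]
    have := Real.rpow_le_rpow_of_nonpos (by positivity) h2 (by linarith : -Q ≤ 0)
    gcongr
  set D₀ := k ^ (-Q) * h₀ with hD₀
  have hD₀p : 0 < D₀ := by positivity
  have hmain : ∀ l, 0 < l → c * h₀ * l ^ (-β) ≤ H l + c * D₀ := by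
    intro l hl
    have hm := measurable_cknKernel b e Q l
    have h1 : ENNReal.ofReal c * ∫⁻ t in Set.Iio d, ENNReal.ofReal (cknKernel b e Q l t) ∂ρ ≤
        ENNReal.ofReal (H l) := by
      rw [← hH l hl, ← smul_eq_mul (ENNReal.ofReal c), ← lintegral_smul_measure]
      refine lintegral_le_of_Iio_le ?_ hσ ?_ hm (fun t => cknKernel_nonneg hl)
        (antitoneOn_cknKernel hb he hQ.le hl) (continuousOn_cknKernel hl)
      · simp only [Measure.smul_apply, smul_eq_mul, mul_eq_zero]
        exact .inr (Measure.restrict_le_self.absolutelyContinuous hρ)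
      · intro r hr
        rw [Measure.smul_apply, Measure.restrict_apply measurableSet_Iio, Set.Iio_inter_Iio,
          smul_eq_mul]
        exact (hd _ (lt_min hr hdpos) ((min_le_right _ _).trans_lt hdd)).trans
          (measure_mono (Set.Iio_subset_Iio (min_le_left _ _)))
    have h2 : ∫⁻ t in (Set.Iio d)ᶜ, ENNReal.ofReal (cknKernel b e Q l t) ∂ρ ≤
        ENNReal.ofReal D₀ := by
      calc ∫⁻ t in (Set.Iio d)ᶜ, ENNReal.ofReal (cknKernel b e Q l t) ∂ρ
          ≤ ∫⁻ t in (Set.Iio d)ᶜ, ENNReal.ofReal (k ^ (-Q)) * ENNReal.ofReal (cknKernel b e Q 1 t) ∂ρ := by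
            refine setLIntegral_mono' measurableSet_Iio.compl fun t ht => ?_
            rw [← ENNReal.ofReal_mul (by positivity)]
            exact ENNReal.ofReal_le_ofReal (hker l t hl (by simpa using ht))
        _ ≤ ∫⁻ t, ENNReal.ofReal (k ^ (-Q)) * ENNReal.ofReal (cknKernel b e Q 1 t) ∂ρ :=
            setLIntegral_le_lintegral _ _
        _ = ENNReal.ofReal D₀ := by
            rw [lintegral_const_mul' _ _ ENNReal.ofReal_ne_top, hE 1 one_pos,
              ← ENNReal.ofReal_mul (by positivity), Real.one_rpow, mul_one]
    have h3 := lintegral_add_compl (μ := ρ) (fun t => ENNReal.ofReal (cknKernel b e Q l t))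
      (measurableSet_Iio (a := d))
    rw [hE l hl] at h3
    have h4 : ENNReal.ofReal (c * h₀ * l ^ (-β)) ≤ ENNReal.ofReal (H l + c * D₀) := by
      rw [mul_assoc, ENNReal.ofReal_mul hc0.le, ← h3, mul_add,
        ENNReal.ofReal_add (hH0 l hl).le (by positivity), ENNReal.ofReal_mul hc0.le]
      gcongr
    exact (ENNReal.ofReal_le_ofReal_iff (by have := hH0 l hl; positivity)).1 h4
  have hlim : Tendsto (fun l : ℝ => c * h₀ - c * D₀ * l ^ β) (𝓝[>] 0) (𝓝 (c * h₀)) := by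
    have : ContinuousAt (fun l : ℝ => c * h₀ - c * D₀ * l ^ β) 0 :=
      continuousAt_const.sub (continuousAt_const.mul (Real.continuousAt_rpow_const _ _ (.inr hβ.le)))
    have h1 := this.tendsto
    simp only [Real.zero_rpow hβ.ne', mul_zero, sub_zero] at h1
    exact h1.mono_left nhdsWithin_le_nhds
  obtain ⟨l, hl1, hl0, hlδ⟩ := ((hlim.eventually (lt_mem_nhds hcv)).and (Ioo_mem_nhdsGT hδ)).exists
  refine ⟨l, hl0, hlδ, hl1.trans_le ?_⟩
  have h1 := hmain l hl0
  have h2 : 0 < l ^ β := by positivity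
  rw [Real.rpow_neg hl0.le, ← div_eq_mul_inv, div_le_iff₀ h2] at h1
  linarith

/-- As `l → ∞` only large `t` matter: if `σ` is at most `θ` times the model `ρ` on all large
intervals, then `l^β H(l)` is asymptotically at most `θ h₀`. -/
lemma lintegral_cknKernel_large {σ ρ : Measure ℝ} (hσ : σ (Set.Iic 0) = 0) (hρ : ρ (Set.Iic 0) = 0)
    {b e Q β h₀ : ℝ} (hb : 0 < b) (he : 0 ≤ e) (hQ : 0 < Q) (hβQ : β < Q) (hh₀ : 0 < h₀)
    (hE : ∀ l, 0 < l → ∫⁻ t, ENNReal.ofReal (cknKernel b e Q l t) ∂ρ = ENNReal.ofReal (h₀ * l ^ (-β)))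
    {H : ℝ → ℝ} (hH0 : ∀ l, 0 < l → 0 < H l)
    (hH : ∀ l, 0 < l → ∫⁻ t, ENNReal.ofReal (cknKernel b e Q l t) ∂σ = ENNReal.ofReal (H l))
    {θ R₀ : ℝ} (hθ : 0 ≤ θ) (hR₀ : 0 < R₀)
    (hvol : ∀ R, R₀ ≤ R → σ (Set.Iio R) ≤ ENNReal.ofReal θ * ρ (Set.Iio R))
    {T : ℝ} (hT : ∀ l, 0 < l → T ≤ l ^ β * H l) : T ≤ θ * h₀ := by
  set A := (1 + R₀ ^ b) ^ Q * H 1 with hA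
  have hA0 : 0 < A := by have := hH0 1 one_pos; positivity
  have hker : ∀ l t, 0 < l → 0 < t → t < R₀ →
      cknKernel b e Q l t ≤ l ^ (-Q) * (1 + R₀ ^ b) ^ Q * cknKernel b e Q 1 t := by
    intro l t hl ht htR
    have h1 : (l + t ^ b) ^ (-Q) ≤ l ^ (-Q) :=
      Real.rpow_le_rpow_of_nonpos hl (by have : 0 < t ^ b := by positivity
                                         linarith) (by linarith)
    have h2 : 1 ≤ (1 + R₀ ^ b) ^ Q * (1 + t ^ b) ^ (-Q) := by
      rw [Real.rpow_neg (by positivity), ← div_eq_mul_inv, one_le_div (by positivity)]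
      gcongr
    unfold cknKernel
    rw [mul_assoc, ← mul_assoc _ _ (t ^ (-e)), ← mul_assoc]
    gcongr
    exact h1.trans (le_mul_of_one_le_right (by positivity) h2)
  have hmain : ∀ l, 0 < l → H l ≤ l ^ (-Q) * A + θ * (h₀ * l ^ (-β)) := by
    intro l hl
    have hm := measurable_cknKernel b e Q l
    have h1 : ∫⁻ t in Set.Iio R₀, ENNReal.ofReal (cknKernel b e Q l t) ∂σ ≤
        ENNReal.ofReal (l ^ (-Q) * A) := by
      calc ∫⁻ t in Set.Iio R₀, ENNReal.ofReal (cknKernel b e Q l t) ∂σ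
          ≤ ∫⁻ t in Set.Iio R₀, ENNReal.ofReal (l ^ (-Q) * (1 + R₀ ^ b) ^ Q) *
              ENNReal.ofReal (cknKernel b e Q 1 t) ∂σ := by
            refine lintegral_mono_ae ?_
            filter_upwards [ae_restrict_mem measurableSet_Iio,
              ae_restrict_of_ae (ae_pos_of_Iic hσ)] with t ht ht0
            rw [← ENNReal.ofReal_mul (by positivity)]
            exact ENNReal.ofReal_le_ofReal (hker l t hl ht0 ht)
        _ ≤ ∫⁻ t, ENNReal.ofReal (l ^ (-Q) * (1 + R₀ ^ b) ^ Q) *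
              ENNReal.ofReal (cknKernel b e Q 1 t) ∂σ := setLIntegral_le_lintegral _ _
        _ = ENNReal.ofReal (l ^ (-Q) * A) := by
            rw [lintegral_const_mul' _ _ ENNReal.ofReal_ne_top, hH 1 one_pos,
              ← ENNReal.ofReal_mul (by positivity), hA, mul_assoc]
    have h2 : ∫⁻ t in (Set.Iio R₀)ᶜ, ENNReal.ofReal (cknKernel b e Q l t) ∂σ ≤
        ENNReal.ofReal (θ * (h₀ * l ^ (-β))) := by
      rw [ENNReal.ofReal_mul hθ, ← hE l hl, ← smul_eq_mul (ENNReal.ofReal θ),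
        ← lintegral_smul_measure]
      refine lintegral_le_of_Iio_le (Measure.restrict_le_self.absolutelyContinuous hσ) ?_ ?_ hm
        (fun t => cknKernel_nonneg hl)
        (antitoneOn_cknKernel hb he hQ.le hl) (continuousOn_cknKernel hl)
      · simp [hρ]
      · intro r hr
        rw [Measure.smul_apply, Measure.restrict_apply measurableSet_Iio, smul_eq_mul]
        rcases le_or_gt R₀ r with h | h
        · exact (measure_mono Set.inter_subset_left).trans (hvol r h)
        · have : Set.Iio r ∩ (Set.Iio R₀)ᶜ = ∅ := by
            ext t; simp; intro h1; linarith
          rw [this]; simp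
    have h3 := lintegral_add_compl (μ := σ) (fun t => ENNReal.ofReal (cknKernel b e Q l t))
      (measurableSet_Iio (a := R₀))
    rw [hH l hl] at h3
    have h4 := h3.symm.le.trans (add_le_add h1 h2)
    rw [← ENNReal.ofReal_add (by positivity) (by positivity)] at h4
    exact (ENNReal.ofReal_le_ofReal_iff (by positivity)).1 h4
  have hlim : Tendsto (fun l : ℝ => l ^ (-(Q - β)) * A + θ * h₀) atTop (𝓝 (θ * h₀)) := by
    simpa using ((tendsto_rpow_neg_atTop (sub_pos.2 hβQ)).mul_const A).add_const (θ * h₀)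
  refine ge_of_tendsto hlim ?_
  filter_upwards [eventually_gt_atTop 0] with l hl
  refine (hT l hl).trans ?_
  calc l ^ β * H l ≤ l ^ β * (l ^ (-Q) * A + θ * (h₀ * l ^ (-β))) := by
        have := hmain l hl; gcongr
    _ = l ^ (-(Q - β)) * A + θ * h₀ := by
      rw [show -(Q - β) = β + -Q by ring, Real.rpow_add hl, Real.rpow_neg hl.le β]
      field_simp

/-! ### Consequences of the density condition -/

lemma ARcond_lower {X : Type*} [MetricSpace X] [MeasurableSpace X] {μ : Measure X} {x₀ : X} {n : ℕ}
    (h : ARcond μ x₀ n) {c : ℝ} (hc : c < 1) :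
    ∃ d > 0, ∀ r, 0 < r → r < d → c * (omegaBall n * r ^ n) ≤ (μ (ball x₀ r)).toReal := by
  have hω := omegaBall_pos n
  have hbdd : IsBoundedUnder (· ≥ ·) (𝓝[>] (0 : ℝ))
      fun r => (μ (ball x₀ r)).toReal / (omegaBall n * r ^ n) := by
    refine ⟨0, ?_⟩
    rw [eventually_map]
    filter_upwards [self_mem_nhdsWithin] with r hr
    have : (0 : ℝ) < r := hr
    simp only [ge_iff_le]
    positivity
  have h1 : ∀ᶠ r in 𝓝[>] (0 : ℝ), c < (μ (ball x₀ r)).toReal / (omegaBall n * r ^ n) := by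
    unfold ARcond at h
    exact eventually_lt_of_lt_liminf (by rw [h]; exact hc) hbdd
  obtain ⟨d, hd, hsub⟩ := (mem_nhdsGT_iff_exists_Ioo_subset).1 h1
  refine ⟨d, hd, fun r hr hrd => ?_⟩
  have := hsub ⟨hr, hrd⟩
  simp only [Set.mem_ofPred_eq] at this
  rw [lt_div_iff₀ (by positivity)] at this
  exact this.le

/-- If the density ratio were at least `2` near `0`, its `liminf` would be at least `2`, or the
junk value `0` when the ratio tends to infinity; neither equals `1`. -/
lemma ARcond_upper {X : Type*} [MetricSpace X] [MeasurableSpace X] {μ : Measure X} {x₀ : X} {n : ℕ}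
    (h : ARcond μ x₀ n) {R : ℝ} (hR : 0 < R) :
    ∃ r, 0 < r ∧ r < R ∧ (μ (ball x₀ r)).toReal ≤ 2 * (omegaBall n * r ^ n) := by
  have hω := omegaBall_pos n
  by_contra! hcon
  have h1 : (2 : ℝ) ∈ {c | ∀ᶠ r in 𝓝[>] (0 : ℝ), c ≤ (μ (ball x₀ r)).toReal / (omegaBall n * r ^ n)} := by
    simp only [Set.mem_ofPred_eq]
    filter_upwards [Ioo_mem_nhdsGT hR] with r hr
    have hr0 := hr.1
    rw [le_div_iff₀ (by positivity)]
    exact (hcon r hr.1 hr.2).le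
  unfold ARcond at h
  rw [liminf_eq] at h
  by_cases hb : BddAbove {c | ∀ᶠ r in 𝓝[>] (0 : ℝ), c ≤ (μ (ball x₀ r)).toReal / (omegaBall n * r ^ n)}
  · have := le_csSup hb h1
    rw [h] at this; norm_num at this
  · rw [Real.sSup_of_not_bddAbove hb] at h; norm_num at h

/-! ### The volume bound -/

/-- The identity `t^b k_{2β+2} = k_{2β+1} - l k_{2β+2}` expresses the gradient term of `ckn_bubble`
through the kernel integrals of orders `2β+1` and `2β+2`. -/
lemma integrated_ckn {σ : Measure ℝ} (hσ : ∀ᵐ t ∂σ, 0 < t) {b e β p C l : ℝ}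
    (hb : 0 < b) (hβ : 0 < β) (hp : 0 < p) (hC : 0 < C) (hl : 0 < l)
    (hint : Integrable (cknKernel b e (2 * β + 1) l) σ)
    (h : (∫⁻ t, ENNReal.ofReal (cknKernel b e (2 * β + 2) l t) ∂σ) ^ (1 / p) ≤
      ENNReal.ofReal C * (∫⁻ t, ENNReal.ofReal ((b * β) ^ 2 * (t ^ b * cknKernel b e (2 * β + 2) l t))
        ∂σ) ^ ((1 : ℝ) / 2)) :
    (∫ t, cknKernel b e (2 * β + 2) l t ∂σ) ^ (2 / p) ≤ (C * (b * β)) ^ 2 *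
      (∫ t, cknKernel b e (2 * β + 1) l t ∂σ - l * ∫ t, cknKernel b e (2 * β + 2) l t ∂σ) := by
  have hint2 : Integrable (cknKernel b e (2 * β + 2) l) σ := by
    have := integrable_cknKernel_succ hσ hl hint
    rwa [show 2 * β + 1 + 1 = 2 * β + 2 by ring] at this
  have hsplit : ∀ᵐ t ∂σ, t ^ b * cknKernel b e (2 * β + 2) l t =
      cknKernel b e (2 * β + 1) l t - l * cknKernel b e (2 * β + 2) l t := by
    filter_upwards [hσ] with t ht
    rw [cknKernel_succ (Q := 2 * β + 1) hl ht, show 2 * β + 1 + 1 = 2 * β + 2 by ring]; ring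
  have hint3 : Integrable (fun t => t ^ b * cknKernel b e (2 * β + 2) l t) σ :=
    (hint.sub (hint2.const_mul l)).congr (hsplit.mono fun t ht => ht.symm)
  have hZ : ∫ t, t ^ b * cknKernel b e (2 * β + 2) l t ∂σ =
      ∫ t, cknKernel b e (2 * β + 1) l t ∂σ - l * ∫ t, cknKernel b e (2 * β + 2) l t ∂σ := by
    rw [integral_congr_ae hsplit, integral_sub hint (hint2.const_mul l), integral_const_mul]
  have hY0 : 0 ≤ ∫ t, cknKernel b e (2 * β + 2) l t ∂σ :=
    integral_nonneg_of_ae (hσ.mono fun t ht => cknKernel_nonneg hl ht)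
  have hZae : 0 ≤ᵐ[σ] fun t => t ^ b * cknKernel b e (2 * β + 2) l t := hσ.mono fun t ht =>
    mul_nonneg (by positivity) (cknKernel_nonneg hl ht)
  have hZ0 := integral_nonneg_of_ae hZae
  rw [← hZ]
  set Y := ∫ t, cknKernel b e (2 * β + 2) l t ∂σ
  set Z := ∫ t, t ^ b * cknKernel b e (2 * β + 2) l t ∂σ
  rw [← ofReal_integral_eq_lintegral_ofReal hint2 (hσ.mono fun t ht => cknKernel_nonneg hl ht),
    ← ofReal_integral_eq_lintegral_ofReal (hint3.const_mul _)
      (hZae.mono fun t ht => mul_nonneg (by positivity) ht), integral_const_mul,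
    ENNReal.ofReal_rpow_of_nonneg hY0 (by positivity),
    ENNReal.ofReal_rpow_of_nonneg (by positivity) (by positivity), ← ENNReal.ofReal_mul hC.le,
    ENNReal.ofReal_le_ofReal_iff (by positivity)] at h
  have h2 := pow_le_pow_left₀ (by positivity) h 2
  rw [← Real.rpow_mul_natCast hY0, mul_pow, ← Real.rpow_mul_natCast (by positivity)] at h2
  rw [show (1 / 2 : ℝ) * ((2 : ℕ) : ℝ) = 1 by norm_num, Real.rpow_one,
    show 1 / p * ((2 : ℕ) : ℝ) = 2 / p by push_cast; ring] at h2
  exact h2.trans_eq (by ring)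

/-- under `(CKN)_C^{x₀}`, `(VD)^n_{C₀}` and `(AR)^n_{x₀}` on a proper metric
measure space, every ball satisfies `μ(B(x,ρ)) ≥ C₀⁻¹ (K_a/C)^{n/(1-a)} ω_n ρ^n`. -/
theorem ckn_volume_lower_bound {X : Type*} [MetricSpace X] [ProperSpace X]
    [MeasurableSpace X] [BorelSpace X] (μ : Measure X)
    (hvol : ∀ U : Set X, IsOpen U → U.Nonempty → Bornology.IsBounded U → 0 < μ U ∧ μ U < ⊤)
    (n : ℕ) (hn : 3 ≤ n) (a p : ℝ) (ha0 : 0 ≤ a) (ha1 : a < 1)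
    (hp : p = 2 * n / (n - 2 + 2 * a))
    (x₀ : X) (C C₀ : ℝ) (hC : CKNconst n a p ≤ C) (hC₀ : 1 ≤ C₀)
    (hCKN : CKNineq μ x₀ a p C) (hVD : VDcond μ n C₀) (hAR : ARcond μ x₀ n) :
    ∀ x : X, ∀ ρ : ℝ, 0 < ρ →
      ENNReal.ofReal (C₀⁻¹ * (CKNconst n a p / C) ^ ((n : ℝ) / (1 - a)) * omegaBall n * ρ ^ n)
        ≤ μ (ball x ρ) := by
  have hn3 : (3 : ℝ) ≤ n := by exact_mod_cast hn
  have ha1' : 0 < 1 - a := by linarith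
  have hden : 0 < (n : ℝ) - 2 + 2 * a := by linarith
  have hp0 : 0 < p := by rw [hp]; apply div_pos <;> linarith
  set b := 2 - a * p with hbe
  set β := ((n : ℝ) - 2 + 2 * a) / (2 * (1 - a)) with hβdef
  have hβ : 0 < β := by rw [hβdef]; positivity
  have hβp : β * p = 2 * β + 2 := by rw [hβdef, hp]; field_simp; ring
  have hbβ : b * β = n - 2 := by rw [hbe, hβdef, hp]; field_simp; ring
  have hb : 0 < b := by
    by_contra! h
    nlinarith [mul_nonneg (neg_nonneg.2 h) hβ.le]
  have hq : (n : ℝ) / (1 - a) = 2 * β + 2 := by rw [hβdef]; field_simp; ring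
  have he : 0 ≤ a * p := by positivity
  have hdim : ((n : ℝ) - a * p) / b = β + 1 := by
    rw [div_eq_iff hb.ne']; linarith
  have hω := omegaBall_pos n
  have hK := cknConst_pos hb hβ hbe hbβ
  have hC0 : 0 < C := hK.trans_le hC
  have hC₀0 : 0 < C₀ := by linarith
  have hball : ∀ (x : X) (r : ℝ), 0 < r → μ (ball x r) ≠ ⊤ := fun x r hr =>
    (hvol _ isOpen_ball ⟨x, mem_ball_self hr⟩ isBounded_ball).2.ne
  -- the doubling condition, in terms of real numbers
  have hVD' : ∀ (x : X) (r R : ℝ), 0 < r → r < R →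
      (μ (ball x R)).toReal ≤ C₀ * (R / r) ^ n * (μ (ball x r)).toReal := by
    intro x r R hr hrR
    have hR : 0 < R := hr.trans hrR
    have h1 := ENNReal.toReal_mono (ENNReal.mul_ne_top ENNReal.ofReal_ne_top (hball x r hr))
      (hVD x r R hr hrR)
    rwa [ENNReal.toReal_mul, ENNReal.toReal_ofReal (by positivity), Real.rpow_natCast] at h1
  -- a small ball of controlled density, scaled up by doubling
  have hupper : ∀ R, 0 < R → (μ (ball x₀ R)).toReal ≤ 2 * C₀ * (omegaBall n * R ^ n) := by
    intro R hR
    obtain ⟨r, hr, hrR, h1⟩ := ARcond_upper hAR hR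
    calc (μ (ball x₀ R)).toReal ≤ C₀ * (R / r) ^ n * (μ (ball x₀ r)).toReal := hVD' x₀ r R hr hrR
      _ ≤ C₀ * (R / r) ^ n * (2 * (omegaBall n * r ^ n)) := by gcongr
      _ = 2 * C₀ * (omegaBall n * R ^ n) := by rw [div_pow]; field_simp
  -- from here on `μ` enters only through the distribution of the distance to `x₀`
  set σ : Measure ℝ := μ.map (dist x₀) with hσdef
  have hd : Measurable (dist x₀) := by fun_prop
  have hσIio : ∀ r, σ (Set.Iio r) = μ (ball x₀ r) := by
    intro r
    rw [hσdef, Measure.map_apply hd measurableSet_Iio]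
    congr 1; ext x; simp [dist_comm]
  have hσle : ∀ r, 0 < r → ∀ c, 0 ≤ c → (μ (ball x₀ r)).toReal ≤ c * (omegaBall n * r ^ n) →
      σ (Set.Iio r) ≤ ENNReal.ofReal c * radialMeasure n (Set.Iio r) := by
    intro r hr c hc h
    rw [hσIio, radialMeasure_Iio (by omega) hr, ← ENNReal.ofReal_mul hc,
      ← ENNReal.ofReal_toReal (hball x₀ r hr)]
    exact ENNReal.ofReal_le_ofReal h
  have hσ0 : σ (Set.Iic 0) = 0 := by
    have h1 : ∀ R, 0 < R → σ (Set.Iic 0) ≤ ENNReal.ofReal (2 * C₀ * (omegaBall n * R ^ n)) := by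
      intro R hR
      refine (measure_mono (Set.Iic_subset_Iio.2 hR)).trans ?_
      rw [hσIio, ← ENNReal.ofReal_toReal (hball x₀ R hR)]
      exact ENNReal.ofReal_le_ofReal (hupper R hR)
    have h2 : Tendsto (fun R : ℝ => ENNReal.ofReal (2 * C₀ * (omegaBall n * R ^ n))) (𝓝[>] 0) (𝓝 0) := by
      have : Continuous fun R : ℝ => ENNReal.ofReal (2 * C₀ * (omegaBall n * R ^ n)) :=
        ENNReal.continuous_ofReal.comp (by fun_prop)
      have h3 := this.tendsto 0
      rw [zero_pow (by omega), mul_zero, mul_zero, ENNReal.ofReal_zero] at h3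
      exact h3.mono_left nhdsWithin_le_nhds
    refine le_antisymm (ge_of_tendsto h2 ?_) zero_le
    filter_upwards [self_mem_nhdsWithin] with R hR using h1 R hR
  have hσpos := ae_pos_of_Iic hσ0
  have hx₀ : ∀ᵐ x ∂μ, 0 < dist x₀ x := ae_of_ae_map hd.aemeasurable hσpos
  set h₀ := n * omegaBall n / b * Real.Gamma (β + 1) * Real.Gamma β / Real.Gamma (2 * β + 1) with hh₀
  have hh₀pos : 0 < h₀ := by
    have h1 := Real.Gamma_pos_of_pos hβ
    have h2 := Real.Gamma_pos_of_pos (s := β + 1) (by positivity)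
    have h3 := Real.Gamma_pos_of_pos (s := 2 * β + 1) (by positivity)
    positivity
  have hE : ∀ l, 0 < l → ∫⁻ t, ENNReal.ofReal (cknKernel b (a * p) (2 * β + 1) l t)
      ∂(radialMeasure n) = ENNReal.ofReal (h₀ * l ^ (-β)) := by
    intro l hl
    rw [lintegral_cknKernel_radialMeasure (by omega) hb (by linarith) (by rw [hdim]; linarith) hl,
      hdim, show 2 * β + 1 - (β + 1) = β by ring]
  have hint : ∀ l, 0 < l → Integrable (cknKernel b (a * p) (2 * β + 1) l) σ := by
    intro l hl
    refine ⟨(measurable_cknKernel _ _ _ _).aestronglyMeasurable, ?_⟩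
    rw [hasFiniteIntegral_iff_ofReal (hσpos.mono fun t ht => cknKernel_nonneg hl ht)]
    have h1 := lintegral_le_of_Iio_le (σ₂ := ENNReal.ofReal (2 * C₀) • radialMeasure n) hσ0
      (by simp [radialMeasure_Iic]) (fun r hr => hσle r hr _ (by positivity) (hupper r hr))
      (measurable_cknKernel b (a * p) (2 * β + 1) l) (fun t => cknKernel_nonneg hl)
      (antitoneOn_cknKernel hb he (by positivity) hl) (continuousOn_cknKernel hl)
    refine h1.trans_lt ?_
    rw [lintegral_smul_measure, hE l hl]
    exact ENNReal.mul_lt_top ENNReal.ofReal_lt_top ENNReal.ofReal_lt_top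
  set H : ℝ → ℝ := fun l => ∫ t, cknKernel b (a * p) (2 * β + 1) l t ∂σ with hHdef
  have hHl : ∀ l, 0 < l → ∫⁻ t, ENNReal.ofReal (cknKernel b (a * p) (2 * β + 1) l t) ∂σ =
      ENNReal.ofReal (H l) := fun l hl =>
    (ofReal_integral_eq_lintegral_ofReal (hint l hl)
      (hσpos.mono fun t ht => cknKernel_nonneg hl ht)).symm
  have hHpos : ∀ l, 0 < l → 0 < H l := by
    intro l hl
    have hk : ∀ᵐ t ∂σ, t ∈ Function.support (cknKernel b (a * p) (2 * β + 1) l) := by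
      filter_upwards [hσpos] with t ht
      have : 0 < cknKernel b (a * p) (2 * β + 1) l t := by unfold cknKernel; positivity
      exact this.ne'
    have hk2 : σ (Function.support (cknKernel b (a * p) (2 * β + 1) l)) = σ Set.univ :=
      measure_congr (eventuallyEq_univ.2 hk)
    refine (integral_pos_iff_support_of_nonneg_ae
      (hσpos.mono fun t ht => cknKernel_nonneg hl ht) (hint l hl)).2 ?_
    rw [hk2]
    refine lt_of_lt_of_le ?_ (measure_mono (Set.subset_univ (Set.Iio 1)))
    rw [hσIio]
    exact (hvol _ isOpen_ball ⟨x₀, mem_ball_self one_pos⟩ isBounded_ball).1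
  set s := (CKNconst n a p / C) ^ (2 * β + 2) with hs
  have hs0 : 0 < s := by positivity
  have hs1 : s ≤ 1 := Real.rpow_le_one (by positivity) ((div_le_one hC0).2 hC) (by positivity)
  have hT : ∀ l, 0 < l → s * h₀ ≤ l ^ β * H l := by
    refine ode_comparison (Y := fun l => ∫ t, cknKernel b (a * p) (2 * β + 2) l t ∂σ)
      (D := (C * (b * β)) ^ 2) hβ hp0 hβp (by positivity) hHpos ?_ ?_ ?_ ?_
    · intro l hl
      have := hasDerivAt_integral_cknKernel hσpos (by positivity) hl hint
      rwa [show 2 * β + 1 + 1 = 2 * β + 2 by ring] at this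
    · intro l hl
      exact integrated_ckn hσpos hb hβ hp0 hC0 hl (hint l hl)
        (ckn_bubble hp0 hCKN hx₀ hb hβ hl hbe hβp rfl)
    · intro ψ hψ h
      exact cknConst_threshold hb hβ hp0 hbe hbβ hβp hC0 hψ h
    · intro v hv δ hδ
      refine lintegral_cknKernel_small hσ0 (radialMeasure_Iic n) hb he (by positivity) hβ hh₀pos hE
        hHpos hHl ?_ (hv.trans_le (mul_le_of_le_one_left hh₀pos.le hs1)) hδ
      intro c hc0 hc1
      obtain ⟨d, hd0, h1⟩ := ARcond_lower hAR hc1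
      refine ⟨d, hd0, fun r hr hrd => ?_⟩
      rw [hσIio, radialMeasure_Iio (by omega) hr, ← ENNReal.ofReal_mul hc0.le]
      exact ENNReal.ofReal_le_of_le_toReal (h1 r hr hrd)
  intro x ρ hρ
  rw [hq, ← hs]
  by_contra! hcon
  set V := (μ (ball x ρ)).toReal with hV
  have hVlt : V < C₀⁻¹ * s * omegaBall n * ρ ^ n := by
    rwa [← ENNReal.ofReal_toReal (hball x ρ hρ), ENNReal.ofReal_lt_ofReal_iff (by positivity)] at hcon
  have hV0 : 0 ≤ V := ENNReal.toReal_nonneg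
  set θ := C₀ * V / (omegaBall n * ρ ^ n) with hθ
  have hθ0 : 0 ≤ θ := by positivity
  have hθs : θ < s := by
    rw [hθ, div_lt_iff₀ (by positivity)]
    calc C₀ * V < C₀ * (C₀⁻¹ * s * omegaBall n * ρ ^ n) := by gcongr
      _ = s * (omegaBall n * ρ ^ n) := by field_simp
  -- doubling around `x` bounds the balls `B(x₀,R) ⊆ B(x,R+D)` by `θ' ω_n R^n` for large `R`
  obtain ⟨θ', hθ1, hθ2⟩ := exists_between hθs
  set D := dist x₀ x with hD
  have hlim : Tendsto (fun R : ℝ => θ * (1 + D / R) ^ n) atTop (𝓝 θ) := by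
    have h1 : Tendsto (fun R : ℝ => D / R) atTop (𝓝 0) := tendsto_const_nhds.div_atTop tendsto_id
    simpa using ((h1.const_add 1).pow n).const_mul θ
  obtain ⟨R₁, hR₁⟩ := eventually_atTop.1 (hlim.eventually (gt_mem_nhds hθ1))
  have hR₀ : 0 < max R₁ (ρ + 1) := lt_max_of_lt_right (by linarith)
  have hlarge := lintegral_cknKernel_large hσ0 (radialMeasure_Iic n) hb he (by positivity)
    (by linarith : β < 2 * β + 1) hh₀pos hE hHpos hHl (hθ0.trans hθ1.le) hR₀ ?_ hT
  · have := le_of_mul_le_mul_right hlarge hh₀pos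
    linarith
  · intro R hR
    have hR1 := hR₁ R ((le_max_left _ _).trans hR)
    have hRρ : ρ + 1 ≤ R := (le_max_right _ _).trans hR
    have hR0 : 0 < R := hR₀.trans_le hR
    have hD0 : 0 ≤ D := dist_nonneg
    refine hσle R hR0 _ (hθ0.trans hθ1.le) ?_
    calc (μ (ball x₀ R)).toReal ≤ (μ (ball x (R + D))).toReal :=
          ENNReal.toReal_mono (hball _ _ (by positivity))
            (measure_mono (ball_subset_ball' (by linarith)))
      _ ≤ C₀ * ((R + D) / ρ) ^ n * V := hVD' x ρ (R + D) hρ (by linarith)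
      _ = θ * (1 + D / R) ^ n * (omegaBall n * R ^ n) := by
          rw [hθ, show 1 + D / R = (R + D) / R by field_simp, div_pow, div_pow]; field_simp
      _ ≤ θ' * (omegaBall n * R ^ n) := by gcongr
end

section
/- Let (X,d) be a metric space and μ a Borel measure on X with 0 < μ(U) < ∞ for every nonempty bounded open set U ⊆ X. If (VD)^n_{C₀} holds for some integer n ≥ 1 and some C₀ ≥ 1, then the Hausdorff dimension of (X,d) is at most n. -/
/-!
Fix a ball `B(x₀, R)` and `0 < ε < R`. If `F ⊆ B(x₀, R)` is finite and `ε`-separated, the balls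
`B(x, ε/2)`, `x ∈ F`, are disjoint and contained in `B(x₀, 2R)`, while the volume condition and
`B(x₀, 2R) ⊆ B(x, 4R)` give `μ(B(x₀, 2R)) ≤ C₀ (8R/ε)^n μ(B(x, ε/2))`. Summing over `F` and
cancelling `μ(B(x₀, 2R)) ∈ (0, ∞)` yields `#F ≤ C₀ (8R/ε)^n` (`card_le_of_isSeparated`). Hence
`B(x₀, R)` has a finite maximal `ε`-separated subset, which is an `ε`-net with at most
`C₀ (8R/ε)^n` points (`exists_finset_isCover`). Covering by the corresponding closed balls, of
diameter at most `2ε`, and letting `ε → 0` bounds the `n`-dimensional Hausdorff measure of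
`B(x₀, R)` by `C₀ (16R)^n` (`hausdorffMeasure_ball_le`), so this ball has dimension at most `n`.
Finally `X` is a countable union of such balls.
-/

open MeasureTheory Filter Topology Metric

open scoped NNReal ENNReal MeasureTheory

section

variable {X : Type*} [MetricSpace X] [MeasurableSpace X] [BorelSpace X] {μ : Measure X}
  {n : ℕ} {C₀ : ℝ}

/-- Volume counting: the volume condition bounds the size of separated subsets of a ball. -/
lemma card_le_of_isSeparated
    (hvol : ∀ U : Set X, IsOpen U → U.Nonempty → Bornology.IsBounded U → 0 < μ U ∧ μ U < ⊤)
    (hVD : VDcond μ n C₀) (x₀ : X) {R : ℝ} {ε : ℝ≥0} (hε : 0 < ε) (hεR : (ε : ℝ) < R)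
    (F : Finset X) (hF : (F : Set X) ⊆ ball x₀ R) (hsep : IsSeparated ε (F : Set X)) :
    (F.card : ℝ≥0∞) ≤ ENNReal.ofReal (C₀ * (8 * R / ε) ^ n) := by
  have hε' : (0 : ℝ) < ε := hε
  have hR : 0 < R := hε'.trans hεR
  obtain ⟨hpos, hfin⟩ := hvol (ball x₀ (2 * R)) isOpen_ball
    ⟨x₀, mem_ball_self (by positivity)⟩ isBounded_ball
  set V := μ (ball x₀ (2 * R)) with hV
  set K := ENNReal.ofReal (C₀ * (8 * R / ε) ^ n) with hK
  have hdisj : (F : Set X).PairwiseDisjoint fun x => ball x ((ε : ℝ) / 2) := by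
    intro x hx y hy hxy
    refine ball_disjoint_ball ?_
    have h : (ε : ℝ≥0∞) < edist x y := hsep hx hy hxy
    rw [edist_nndist, ENNReal.coe_lt_coe, ← NNReal.coe_lt_coe, coe_nndist] at h
    linarith
  have hVx : ∀ x ∈ F, V ≤ K * μ (ball x ((ε : ℝ) / 2)) := by
    intro x hx
    have hx' : dist x x₀ < R := hF hx
    calc V ≤ μ (ball x (4 * R)) := by
            refine measure_mono (ball_subset_ball' ?_)
            rw [dist_comm]
            linarith
      _ ≤ ENNReal.ofReal (C₀ * (4 * R / ((ε : ℝ) / 2)) ^ (n : ℝ)) * μ (ball x ((ε : ℝ) / 2)) :=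
            hVD x _ _ (by positivity) (by linarith)
      _ = K * μ (ball x ((ε : ℝ) / 2)) := by
            rw [Real.rpow_natCast, hK, show 4 * R / ((ε : ℝ) / 2) = 8 * R / ε by field_simp; ring]
  have hsum : ∑ x ∈ F, μ (ball x ((ε : ℝ) / 2)) ≤ V := by
    rw [← measure_biUnion_finset hdisj fun _ _ => measurableSet_ball]
    refine measure_mono (Set.iUnion₂_subset fun x hx => ball_subset_ball' ?_)
    have hx' : dist x x₀ < R := hF hx
    linarith
  have hmul : (F.card : ℝ≥0∞) * V ≤ K * V := by
    calc (F.card : ℝ≥0∞) * V = ∑ _x ∈ F, V := by simp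
      _ ≤ ∑ x ∈ F, K * μ (ball x ((ε : ℝ) / 2)) := Finset.sum_le_sum hVx
      _ = K * ∑ x ∈ F, μ (ball x ((ε : ℝ) / 2)) := by rw [Finset.mul_sum]
      _ ≤ K * V := by gcongr
  exact (ENNReal.mul_le_mul_iff_left hpos.ne' hfin.ne).1 hmul

/-- Balls have `ε`-nets of controlled cardinality. -/
lemma exists_finset_isCover
    (hvol : ∀ U : Set X, IsOpen U → U.Nonempty → Bornology.IsBounded U → 0 < μ U ∧ μ U < ⊤)
    (hVD : VDcond μ n C₀) (x₀ : X) {R : ℝ} {ε : ℝ≥0} (hε : 0 < ε) (hεR : (ε : ℝ) < R) :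
    ∃ F : Finset X, IsCover ε (ball x₀ R) (F : Set X) ∧
      (F.card : ℝ≥0∞) ≤ ENNReal.ofReal (C₀ * (8 * R / ε) ^ n) := by
  have key := card_le_of_isSeparated hvol hVD x₀ hε hεR
  obtain ⟨m, hm⟩ := ENNReal.exists_nat_gt
    (ENNReal.ofReal_ne_top (r := C₀ * (8 * R / ε) ^ n))
  have hpack : packingNumber ε (ball x₀ R) ≠ ⊤ := by
    refine ne_top_of_le_ne_top (ENat.natCast_ne_top m) ?_
    refine iSup₂_le fun C hC => iSup_le fun hsep => ?_
    by_contra! hlt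
    -- a subset with exactly `m` points already violates the counting bound, which is below `m`
    obtain ⟨t, htC, ht⟩ := Set.exists_subset_encard_eq hlt.le
    have htfin : t.Finite := Set.finite_of_encard_eq_coe ht
    lift t to Finset X using htfin
    rw [Set.encard_coe_eq_coe_finsetCard, Nat.cast_inj] at ht
    have h := key t (htC.trans hC) (hsep.subset htC)
    rw [ht] at h
    exact absurd hm h.not_gt
  have hfin : (maximalSeparatedSet ε (ball x₀ R)).Finite := by
    rw [← Set.encard_ne_top_iff, encard_maximalSeparatedSet hpack]
    exact hpack
  refine ⟨hfin.toFinset, ?_, key _ ?_ ?_⟩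
  · simpa using isCover_maximalSeparatedSet hpack
  · simpa using maximalSeparatedSet_subset
  · simpa using isSeparated_maximalSeparatedSet

lemma hausdorffMeasure_ball_le
    (hvol : ∀ U : Set X, IsOpen U → U.Nonempty → Bornology.IsBounded U → 0 < μ U ∧ μ U < ⊤)
    (hVD : VDcond μ n C₀) (hC₀ : 0 ≤ C₀) (x₀ : X) {R : ℝ≥0} (hR : 0 < R) :
    μH[n] (ball x₀ R) ≤ ENNReal.ofReal (C₀ * (16 * R) ^ n) := by
  let ε : ℕ → ℝ≥0 := fun k => R / (k + 2)
  have hε : ∀ k, 0 < ε k := fun k => by positivity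
  have hεR : ∀ k, (ε k : ℝ) < R := fun k => by
    rw [NNReal.coe_lt_coe]
    exact div_lt_self hR (lt_of_lt_of_le one_lt_two le_add_self)
  choose F hcover hcard using fun k => exists_finset_isCover hvol hVD x₀ (hε k) (hεR k)
  have hlim : Tendsto (fun k => 2 * (ε k : ℝ≥0∞)) atTop (𝓝 0) := by
    have h : Tendsto ε atTop (𝓝 0) := by
      have hreal : Tendsto (fun k : ℕ => (R : ℝ) / ((k : ℝ) + 2)) atTop (𝓝 0) :=
        tendsto_const_nhds.div_atTop
          (tendsto_atTop_add_const_right _ _ tendsto_natCast_atTop_atTop)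
      rw [← NNReal.tendsto_coe]
      simpa [ε] using hreal
    have h2 : Tendsto (fun k => 2 * ε k) atTop (𝓝 0) := by simpa using h.const_mul 2
    simpa using ENNReal.tendsto_coe.2 h2
  refine (Measure.hausdorffMeasure_le_liminf_sum (ι := fun k => F k) n (ball x₀ R) _ hlim
    (fun k i => closedEBall (i : X) (ε k)) ?_ ?_).trans ?_
  · exact .of_forall fun k i => ediam_closedEBall_le
  · refine .of_forall fun k => ?_
    have h := isCover_iff_subset_iUnion_closedEBall.1 (hcover k)
    rw [Set.biUnion_eq_iUnion] at h
    exact h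
  · refine (liminf_le_liminf (v := fun _ => ENNReal.ofReal (C₀ * (16 * R) ^ n))
      (.of_forall fun k => ?_)).trans (liminf_const _).le
    have hk : (0 : ℝ) < ε k := hε k
    calc ∑ i : F k, ediam (closedEBall (i : X) (ε k)) ^ (n : ℝ)
        ≤ ∑ _i : F k, (2 * (ε k : ℝ≥0∞)) ^ (n : ℝ) := by
          gcongr
          exact ediam_closedEBall_le
      _ = (F k).card * (2 * (ε k : ℝ≥0∞)) ^ n := by simp [ENNReal.rpow_natCast]
      _ ≤ ENNReal.ofReal (C₀ * (8 * R / ε k) ^ n) * (2 * (ε k : ℝ≥0∞)) ^ n := by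
          gcongr
          exact hcard k
      _ = ENNReal.ofReal (C₀ * (16 * R) ^ n) := by
          rw [show (2 * (ε k : ℝ≥0∞)) = ENNReal.ofReal (2 * ε k) by
              rw [ENNReal.ofReal_mul (by norm_num)]; simp,
            ← ENNReal.ofReal_pow (by positivity), ← ENNReal.ofReal_mul (by positivity),
            mul_assoc, ← mul_pow]
          congr 3
          field_simp
          ring

end

/-- `(VD)^n_{C₀}` implies that the Hausdorff dimension of `(X,d)` is at most `n`. -/
theorem VD_implies_dimH_le {X : Type*} [MetricSpace X]
    [MeasurableSpace X] [BorelSpace X] (μ : Measure X)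
    (hvol : ∀ U : Set X, IsOpen U → U.Nonempty → Bornology.IsBounded U → 0 < μ U ∧ μ U < ⊤)
    (n : ℕ) (hn : 1 ≤ n) (C₀ : ℝ) (hC₀ : 1 ≤ C₀) (hVD : VDcond μ n C₀) :
    dimH (Set.univ : Set X) ≤ n := by
  rcases isEmpty_or_nonempty X with hX | ⟨⟨x₀⟩⟩
  · simp [Set.univ_eq_empty_iff.2 hX]
  have hcov : (Set.univ : Set X) = ⋃ k : ℕ, ball x₀ ((k + 1 : ℝ≥0) : ℝ) := by
    refine (Set.eq_univ_of_forall fun x => Set.mem_iUnion.2 ?_).symm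
    obtain ⟨k, hk⟩ := exists_nat_gt (dist x x₀)
    refine ⟨k, ?_⟩
    rw [mem_ball]
    push_cast
    linarith
  rw [hcov, dimH_iUnion]
  refine iSup_le fun k => ?_
  have h := hausdorffMeasure_ball_le hvol hVD (zero_le_one.trans hC₀) x₀
    (R := (k + 1 : ℝ≥0)) (by positivity)
  have h' := dimH_le_of_hausdorffMeasure_ne_top (d := (n : ℝ≥0))
    (s := ball x₀ ((k + 1 : ℝ≥0) : ℝ)) (by
      rw [NNReal.coe_natCast]
      exact ne_top_of_le_ne_top ENNReal.ofReal_ne_top h)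
  simpa using h'
end

section
/- For every λ > 0, the function x ↦ (λ+|x|^{2-ap})^{(n-1+a)/(a-1)}·|x|^{-ap} is integrable on ℝ^n with respect to Lebesgue measure, and the quantity Q_E(λ) = ((1-a)/(n-1+a))·∫_{ℝ^n} (λ+|x|^{2-ap})^{(n-1+a)/(a-1)}·|x|^{-ap} dx satisfies the layer-cake representation Q_E(λ) = ((1-a)/(n-1+a))·∫_0^∞ ω_n·ρ^n·f(λ,ρ) dρ, where the integral on the right converges. -/
/-!
Write `s = 2 - ap`, `c = ap`, `m = (n-1+a)/(a-1)` and `g(ρ) = (λ + ρ^s)^m ρ^(-c)`. Since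
`m - 1 = n/(a-1)`, the kernel is exactly `f(λ, ·) = -g'`. Polar coordinates turn the integral over
`ℝ^n` into `n ω_n ∫_0^∞ ρ^(n-1) g(ρ) dρ`, and integrating `(ρ^n g)' = n ρ^(n-1) g - ρ^n f` over
`(0,∞)` gives the claim as soon as the boundary terms vanish and both sides converge.

The function `g` is bounded by `λ^m ρ^(-c)` near `0` and by `ρ^(sm-c)` near infinity, where `c < 2`
and, for the given `p`, `sm - c = -2(n-1)`; as `n ≥ 3` these powers give convergence of
`∫ ρ^(n-1) g` and vanishing of `ρ^n g` at both ends. Convergence of `∫ ρ^n f` follows from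
`0 ≤ ρ f ≤ (c - ms) g`.
-/

open MeasureTheory Filter Topology Metric

/-- The kernel `f(λ,ρ)` appearing in the layer-cake representation of `Q_E` and `Q̃`. -/
noncomputable def fAux (n : ℕ) (a p lam ρ : ℝ) : ℝ :=
  (lam + ρ ^ (2 - a * p)) ^ ((n : ℝ) / (a - 1)) * ρ ^ (-(a * p) - 1) *
    (ρ ^ (2 - a * p) * ((((n : ℝ) - 1 + a) / (1 - a)) * (2 - a * p) + a * p) + a * p * lam)

/-- The auxiliary function `Q_E(λ)` built from the Euclidean extremals. -/
noncomputable def QE (n : ℕ) (a p lam : ℝ) : ℝ :=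
  ((1 - a) / ((n : ℝ) - 1 + a)) *
    ∫ x : EuclideanSpace ℝ (Fin n),
      (lam + ‖x‖ ^ (2 - a * p)) ^ (((n : ℝ) - 1 + a) / (a - 1)) * ‖x‖ ^ (-(a * p))

/-- Comparison with the power `y^(-c)` on `(0,1]` and with `y^(sm-c)` on `(1,∞)`. -/
lemma integrableOn_profile {n : ℕ} (hn : 1 ≤ n) {lam s c m : ℝ} (hlam : 0 < lam)
    (hm : m < 0) (hcn : c < n) (hdecay : s * m - c < -n) :
    IntegrableOn (fun y : ℝ => y ^ (n - 1) * ((lam + y ^ s) ^ m * y ^ (-c))) (Set.Ioi 0) := by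
  have hmeas : Measurable (fun y : ℝ => y ^ (n - 1) * ((lam + y ^ s) ^ m * y ^ (-c))) := by
    fun_prop
  have hpow : ∀ y : ℝ, 0 < y → ∀ e : ℝ, y ^ (n - 1) * y ^ e = y ^ ((n : ℝ) - 1 + e) := by
    intro y hy e
    rw [Real.rpow_add hy, ← Nat.cast_pred hn, Real.rpow_natCast]
  rw [← Set.Ioc_union_Ioi_eq_Ioi (zero_le_one' ℝ)]
  refine IntegrableOn.union ?_ ?_
  · have h1 : IntegrableOn (fun y : ℝ => lam ^ m * y ^ ((n : ℝ) - 1 + -c)) (Set.Ioc 0 1) := by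
      have := (intervalIntegral.intervalIntegrable_rpow' (a := 0) (b := 1)
        (r := (n : ℝ) - 1 + -c) (by linarith)).const_mul (lam ^ m)
      rwa [intervalIntegrable_iff_integrableOn_Ioc_of_le zero_le_one] at this
    refine Integrable.mono' h1 hmeas.aestronglyMeasurable ?_
    refine (ae_restrict_iff' measurableSet_Ioc).2 (.of_forall fun y hy => ?_)
    have hy0 : 0 < y := hy.1
    rw [Real.norm_of_nonneg (by positivity), ← hpow y hy0]
    have : (lam + y ^ s) ^ m ≤ lam ^ m :=
      Real.rpow_le_rpow_of_nonpos hlam (by have := Real.rpow_pos_of_pos hy0 s; linarith) hm.le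
    calc _ ≤ y ^ (n - 1) * (lam ^ m * y ^ (-c)) := by gcongr
      _ = _ := by ring
  · have h1 : IntegrableOn (fun y : ℝ => y ^ ((n : ℝ) - 1 + (s * m - c))) (Set.Ioi 1) :=
      integrableOn_Ioi_rpow_of_lt (by linarith) one_pos
    refine Integrable.mono' h1 hmeas.aestronglyMeasurable ?_
    refine (ae_restrict_iff' measurableSet_Ioi).2 (.of_forall fun y hy => ?_)
    have hy0 : 0 < y := one_pos.trans hy
    rw [Real.norm_of_nonneg (by positivity), ← hpow y hy0, sub_eq_add_neg, Real.rpow_add hy0,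
      Real.rpow_mul hy0.le]
    have : (lam + y ^ s) ^ m ≤ (y ^ s) ^ m :=
      Real.rpow_le_rpow_of_nonpos (by positivity) (by linarith) hm.le
    gcongr

/-- The kernel is dominated by `c - ms` times the radial profile, because its bracket is at most
`(c - ms)(λ + y^s)`. -/
lemma integrableOn_kernel {n : ℕ} (hn : 1 ≤ n) {lam s c m : ℝ} (hlam : 0 < lam) (hs : 0 < s)
    (hc : 0 ≤ c) (hm : m < 0) (hcn : c < n) (hdecay : s * m - c < -n) :
    IntegrableOn (fun y : ℝ => y ^ n * ((lam + y ^ s) ^ (m - 1) * y ^ (-c - 1) *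
      (y ^ s * (-m * s + c) + c * lam))) (Set.Ioi 0) := by
  have h1 := (integrableOn_profile hn hlam hm hcn hdecay).const_mul (-m * s + c)
  refine Integrable.mono' h1 (Measurable.aestronglyMeasurable (by fun_prop)) ?_
  refine (ae_restrict_iff' measurableSet_Ioi).2 (.of_forall fun y hy => ?_)
  have hy0 : (0 : ℝ) < y := hy
  have hms : 0 < -m * s := mul_pos (by linarith) hs
  have hL : 0 < lam + y ^ s := by positivity
  rw [Real.norm_of_nonneg (by positivity)]
  have hb : y ^ s * (-m * s + c) + c * lam ≤ (-m * s + c) * (lam + y ^ s) := by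
    nlinarith [mul_pos hms hlam]
  calc _ ≤ y ^ n * ((lam + y ^ s) ^ (m - 1) * y ^ (-c - 1) *
        ((-m * s + c) * (lam + y ^ s))) := by gcongr
    _ = _ := by
      obtain ⟨k, rfl⟩ := Nat.exists_eq_add_of_le hn
      rw [Real.rpow_sub_one hL.ne', Real.rpow_sub_one hy0.ne', Nat.add_sub_cancel_left, pow_add,
        pow_one]
      field_simp

/-- Integration of `(y^n g)' = n y^(n-1) g - y^n f` over `(0,∞)`. The primitive is written with the
single power `y^(n-c)` so that it is continuous at `0` with value `0`. -/
lemma integral_kernel {n : ℕ} (hn : 1 ≤ n) {lam s c m : ℝ} (hlam : 0 < lam) (hs : 0 < s)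
    (hc : 0 ≤ c) (hm : m < 0) (hcn : c < n) (hdecay : s * m - c < -n) :
    ∫ y in Set.Ioi (0 : ℝ), y ^ n * ((lam + y ^ s) ^ (m - 1) * y ^ (-c - 1) *
      (y ^ s * (-m * s + c) + c * lam)) =
    n * ∫ y in Set.Ioi (0 : ℝ), y ^ (n - 1) * ((lam + y ^ s) ^ m * y ^ (-c)) := by
  have hg := (integrableOn_profile hn hlam hm hcn hdecay).const_mul (n : ℝ)
  have hk := integrableOn_kernel hn hlam hs hc hm hcn hdecay
  have key := integral_Ioi_of_hasDerivAt_of_tendsto (a := 0) (m := 0)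
    (f := fun y : ℝ => (lam + y ^ s) ^ m * y ^ ((n : ℝ) - c))
    (f' := fun y : ℝ => n * (y ^ (n - 1) * ((lam + y ^ s) ^ m * y ^ (-c))) -
      y ^ n * ((lam + y ^ s) ^ (m - 1) * y ^ (-c - 1) * (y ^ s * (-m * s + c) + c * lam)))
    ?_ ?_ (hg.sub hk) ?_
  · rw [integral_sub hg hk, integral_const_mul] at key
    simp only [Real.zero_rpow (sub_pos.2 hcn).ne', mul_zero, sub_zero] at key
    linarith
  · refine ContinuousAt.continuousWithinAt ?_
    refine ContinuousAt.mul (ContinuousAt.rpow_const (by fun_prop (disch := exact Or.inr hs.le)) ?_)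
      (Real.continuousAt_rpow_const _ _ (Or.inr (sub_nonneg.2 hcn.le)))
    left
    rw [Real.zero_rpow hs.ne']
    simpa using hlam.ne'
  · intro y hy
    have hy0 : (0 : ℝ) < y := hy
    have hL : 0 < lam + y ^ s := by positivity
    have h1 := (((Real.hasDerivAt_rpow_const (p := s) (Or.inl hy0.ne')).const_add lam).rpow_const
      (p := m) (Or.inl hL.ne')).mul
      (Real.hasDerivAt_rpow_const (p := (n : ℝ) - c) (Or.inl hy0.ne'))
    refine h1.congr_deriv ?_
    obtain ⟨k, rfl⟩ := Nat.exists_eq_add_of_le hn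
    rw [Real.rpow_sub_one hL.ne', Real.rpow_sub_one hy0.ne', Real.rpow_sub_one hy0.ne',
      Real.rpow_sub_one hy0.ne', sub_eq_add_neg _ c, Real.rpow_add hy0, Real.rpow_natCast,
      Nat.add_sub_cancel_left, pow_add, pow_one]
    field_simp
    ring
  · have h0 : Tendsto (fun y : ℝ => y ^ (-(-(s * m - c + n)))) atTop (𝓝 0) :=
      tendsto_rpow_neg_atTop (by linarith)
    refine squeeze_zero' ?_ ?_ h0
    · filter_upwards [eventually_gt_atTop 0] with y hy
      positivity
    · filter_upwards [eventually_gt_atTop 0] with y hy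
      have : (lam + y ^ s) ^ m ≤ (y ^ s) ^ m :=
        Real.rpow_le_rpow_of_nonpos (by positivity) (by linarith) hm.le
      calc _ ≤ (y ^ s) ^ m * y ^ ((n : ℝ) - c) := by gcongr
        _ = _ := by
          rw [← Real.rpow_mul hy.le, ← Real.rpow_add hy]
          congr 1
          ring

lemma volume_real_unitBall (n : ℕ) (hn : 1 ≤ n) :
    volume.real (ball (0 : EuclideanSpace ℝ (Fin n)) 1) = omegaBall n := by
  have : Nonempty (Fin n) := ⟨⟨0, hn⟩⟩
  rw [Measure.real, EuclideanSpace.volume_ball, omegaBall]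
  have : 0 < Real.Gamma ((n : ℝ) / 2 + 1) := Real.Gamma_pos_of_pos (by positivity)
  simp only [Fintype.card_fin, ENNReal.ofReal_one, one_pow, one_mul]
  rw [ENNReal.toReal_ofReal (by positivity), Real.sqrt_eq_rpow, ← Real.rpow_natCast,
    ← Real.rpow_mul Real.pi_pos.le]
  congr 2
  ring

/-- the integrand of `Q_E(λ)` is Lebesgue-integrable on `ℝ^n`, the kernel
`ρ ↦ ω_n ρ^n f(λ,ρ)` is integrable on `(0,∞)`, and the layer-cake representation
`Q_E(λ) = ((1-a)/(n-1+a)) ∫_0^∞ ω_n ρ^n f(λ,ρ) dρ` holds. -/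
theorem QE_layer_cake (n : ℕ) (hn : 3 ≤ n) (a p : ℝ) (ha0 : 0 ≤ a) (ha1 : a < 1)
    (hp : p = 2 * n / (n - 2 + 2 * a)) (lam : ℝ) (hlam : 0 < lam) :
    Integrable (fun x : EuclideanSpace ℝ (Fin n) =>
        (lam + ‖x‖ ^ (2 - a * p)) ^ (((n : ℝ) - 1 + a) / (a - 1)) * ‖x‖ ^ (-(a * p))) ∧
      IntegrableOn (fun ρ : ℝ => omegaBall n * ρ ^ n * fAux n a p lam ρ) (Set.Ioi 0) ∧
        QE n a p lam =
          ((1 - a) / ((n : ℝ) - 1 + a)) *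
            ∫ ρ in Set.Ioi (0 : ℝ), omegaBall n * ρ ^ n * fAux n a p lam ρ := by
  have hn1 : 1 ≤ n := by omega
  have : Nonempty (Fin n) := ⟨⟨0, hn1⟩⟩
  have hnR : (3 : ℝ) ≤ n := by exact_mod_cast hn
  have hD : (0 : ℝ) < n - 2 + 2 * a := by linarith
  have h1a : a - 1 ≠ 0 := by linarith
  have h1a' : 1 - a ≠ 0 := by linarith
  have hc : 0 ≤ a * p := by rw [hp]; positivity
  have hs : 0 < 2 - a * p := by
    have : 2 - a * p = 2 * (n - 2) * (1 - a) / (n - 2 + 2 * a) := by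
      rw [hp]; field_simp; ring
    rw [this]
    exact div_pos (mul_pos (by linarith) (by linarith)) hD
  have hm : ((n : ℝ) - 1 + a) / (a - 1) < 0 := div_neg_of_pos_of_neg (by linarith) (by linarith)
  have hcn : a * p < n := by linarith
  have hexp : (2 - a * p) * (((n : ℝ) - 1 + a) / (a - 1)) - a * p = -(2 * (n - 1)) := by
    rw [hp]; field_simp; ring
  have hdecay : (2 - a * p) * (((n : ℝ) - 1 + a) / (a - 1)) - a * p < -n := by
    rw [hexp]; linarith
  have hf : ∀ ρ : ℝ, omegaBall n * ρ ^ n * fAux n a p lam ρ = omegaBall n * (ρ ^ n *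
      ((lam + ρ ^ (2 - a * p)) ^ (((n : ℝ) - 1 + a) / (a - 1) - 1) * ρ ^ (-(a * p) - 1) *
      (ρ ^ (2 - a * p) * (-(((n : ℝ) - 1 + a) / (a - 1)) * (2 - a * p) + a * p)
        + a * p * lam))) := by
    intro ρ
    have e1 : ((n : ℝ) - 1 + a) / (a - 1) - 1 = n / (a - 1) := by field_simp; ring
    have e2 : -(((n : ℝ) - 1 + a) / (a - 1)) = ((n : ℝ) - 1 + a) / (1 - a) := by
      rw [← div_neg, neg_sub]
    rw [e1, e2, fAux]
    ring
  simp only [hf]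
  refine ⟨?_, (integrableOn_kernel hn1 hlam hs hc hm hcn hdecay).const_mul _, ?_⟩
  · refine (integrable_fun_norm_addHaar volume (f := fun r : ℝ =>
      (lam + r ^ (2 - a * p)) ^ (((n : ℝ) - 1 + a) / (a - 1)) * r ^ (-(a * p)))).2 ?_
    simpa using integrableOn_profile hn1 hlam hm hcn hdecay
  · have hpolar := integral_fun_norm_addHaar (volume : Measure (EuclideanSpace ℝ (Fin n)))
      (fun r : ℝ => (lam + r ^ (2 - a * p)) ^ (((n : ℝ) - 1 + a) / (a - 1)) * r ^ (-(a * p)))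
    rw [QE, hpolar, volume_real_unitBall n hn1, integral_const_mul,
      integral_kernel hn1 hlam hs hc hm hcn hdecay]
    simp only [finrank_euclideanSpace, Fintype.card_fin, nsmul_eq_mul, smul_eq_mul]
    ring
end
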